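/- Let n = 1 and let Q and Q′ be real normal defining functions of dimension 1 (so (z,χ,τ) ∈ ℂ×ℂ×ℂ), defining hypersurfaces M, M′ ⊆ ℂ² with complexifications ℳ and ℳ′. Assume M′ is of finite type at 0, i.e. (z,χ) ↦ Q′(z,χ,0) does not vanish identically near 0. Let ℋ = (f,g,f̃,g̃) be an HSPM sending (ℳ,0) into (ℳ′,0). Then the following are equivalent: (i) neither z ↦ ∂f/∂z(z,0) nor χ ↦ ∂f̃/∂χ(χ,0) vanishes identically near 0 (ℋ is totally Segre nondegenerate at 0); (ii) (z,χ) ↦ Q(z,χ,0) does not vanish identically near 0 (M is of finite type at 0) and ℋ is not transversally null; (iii) (z,χ) ↦ Q(z,χ,0) does not vanish identically near 0 and ∂g/∂w(0,0) ≠ 0 (ℋ is Segre transversal to ℳ′ at 0). -/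

import Mathlib

open Filter Topology Complex

namespace HSPMpaper

variable {n : ℕ}

/-- Partial derivative of `F` in the `i`-th coordinate direction. -/
noncomputable def pd (i : Fin n) (F : (Fin n → ℂ) → ℂ) : (Fin n → ℂ) → ℂ :=
  fun z => fderiv ℂ F z (Pi.single i 1)

/-- Iterated partial derivative `∂^α` for a multi-index `α`. -/
noncomputable def mpd (α : Fin n → ℕ) (F : (Fin n → ℂ) → ℂ) : (Fin n → ℂ) → ℂ :=
  ((List.ofFn fun i : Fin n => (pd i)^[α i]).foldr (· ∘ ·) id) F

/-- Componentwise complex conjugation on `ℂⁿ`. -/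
def conjV (z : Fin n → ℂ) : Fin n → ℂ := fun i => starRingEnd ℂ (z i)

/-- The conjugate defining function `Q̄(χ,z,τ) = conj (Q (conj χ) (conj z) (conj τ))`. -/
def QBar (Q : (Fin n → ℂ) → (Fin n → ℂ) → ℂ → ℂ) : (Fin n → ℂ) → (Fin n → ℂ) → ℂ → ℂ :=
  fun χ z τ => starRingEnd ℂ (Q (conjV χ) (conjV z) (starRingEnd ℂ τ))

/-- `Q` is a normal defining function (of dimension `n`): holomorphic near the origin of
`ℂⁿ × ℂⁿ × ℂ` and satisfying `Q(0,χ,τ) = τ` and `Q(z,0,τ) = τ` near `0`. -/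
def IsNormalDF (Q : (Fin n → ℂ) → (Fin n → ℂ) → ℂ → ℂ) : Prop :=
  (∀ᶠ p in 𝓝 (0 : (Fin n → ℂ) × (Fin n → ℂ) × ℂ),
      AnalyticAt ℂ (fun q : (Fin n → ℂ) × (Fin n → ℂ) × ℂ => Q q.1 q.2.1 q.2.2) p) ∧
  (∀ᶠ p in 𝓝 (0 : (Fin n → ℂ) × (Fin n → ℂ) × ℂ),
      Q 0 p.2.1 p.2.2 = p.2.2 ∧ Q p.1 0 p.2.2 = p.2.2)

/-- `Q` is a real normal defining function: normal and `Q(z,χ,Q̄(χ,z,w)) = w` near `0`. -/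
def IsRealNormalDF (Q : (Fin n → ℂ) → (Fin n → ℂ) → ℂ → ℂ) : Prop :=
  IsNormalDF Q ∧
  ∀ᶠ p in 𝓝 (0 : (Fin n → ℂ) × (Fin n → ℂ) × ℂ),
    Q p.1 p.2.1 (QBar Q p.2.1 p.1 p.2.2) = p.2.2

/-- `(f,g,f̃,g̃)` is a holomorphic Segre preserving map sending `(ℳ,0)` into `(ℳ',0)`. -/
def IsHSPM (Q Q' : (Fin n → ℂ) → (Fin n → ℂ) → ℂ → ℂ)
    (f : (Fin n → ℂ) → ℂ → Fin n → ℂ) (g : (Fin n → ℂ) → ℂ → ℂ)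
    (ft : (Fin n → ℂ) → ℂ → Fin n → ℂ) (gt : (Fin n → ℂ) → ℂ → ℂ) : Prop :=
  (∀ᶠ p in 𝓝 (0 : (Fin n → ℂ) × ℂ), AnalyticAt ℂ (fun q : (Fin n → ℂ) × ℂ => f q.1 q.2) p) ∧
  (∀ᶠ p in 𝓝 (0 : (Fin n → ℂ) × ℂ), AnalyticAt ℂ (fun q : (Fin n → ℂ) × ℂ => g q.1 q.2) p) ∧
  (∀ᶠ p in 𝓝 (0 : (Fin n → ℂ) × ℂ), AnalyticAt ℂ (fun q : (Fin n → ℂ) × ℂ => ft q.1 q.2) p) ∧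
  (∀ᶠ p in 𝓝 (0 : (Fin n → ℂ) × ℂ), AnalyticAt ℂ (fun q : (Fin n → ℂ) × ℂ => gt q.1 q.2) p) ∧
  f 0 0 = 0 ∧ g 0 0 = 0 ∧ ft 0 0 = 0 ∧ gt 0 0 = 0 ∧
  ∀ᶠ p in 𝓝 (0 : (Fin n → ℂ) × (Fin n → ℂ) × ℂ),
    g p.1 (Q p.1 p.2.1 p.2.2) =
      Q' (f p.1 (Q p.1 p.2.1 p.2.2)) (ft p.2.1 p.2.2) (gt p.2.1 p.2.2)

/-- `M` is of finite type at `0`: `(z,χ) ↦ Q(z,χ,0)` does not vanish identically near `0`. -/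
def FiniteType (Q : (Fin n → ℂ) → (Fin n → ℂ) → ℂ → ℂ) : Prop :=
  ¬ ∀ᶠ p in 𝓝 (0 : (Fin n → ℂ) × (Fin n → ℂ)), Q p.1 p.2 0 = 0

/-- Jacobian matrix of `z ↦ f(z,0)` at `z`. -/
noncomputable def jacz (f : (Fin n → ℂ) → ℂ → Fin n → ℂ) (z : Fin n → ℂ) :
    Matrix (Fin n) (Fin n) ℂ :=
  Matrix.of fun i j => pd j (fun z' => f z' 0 i) z

/-- `ℋ` is Segre transversal to `ℳ'` at `0`: `∂g/∂w(0,0) ≠ 0`. -/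
noncomputable def SegreTransversal (g : (Fin n → ℂ) → ℂ → ℂ) : Prop :=
  deriv (fun w => g 0 w) 0 ≠ 0

/-- `ℋ` is totally Segre nondegenerate at `0`. -/
def TotallySegreNondeg (f ft : (Fin n → ℂ) → ℂ → Fin n → ℂ) : Prop :=
  (¬ ∀ᶠ z in 𝓝 (0 : Fin n → ℂ), (jacz f z).det = 0) ∧
  (¬ ∀ᶠ χ in 𝓝 (0 : Fin n → ℂ), (jacz ft χ).det = 0)

/-- `ℋ` is transversally null: `g ≡ 0` and `g̃ ≡ 0` near `0`. -/
def TransversallyNull (g gt : (Fin n → ℂ) → ℂ → ℂ) : Prop :=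
  (∀ᶠ p in 𝓝 (0 : (Fin n → ℂ) × ℂ), g p.1 p.2 = 0) ∧
  (∀ᶠ p in 𝓝 (0 : (Fin n → ℂ) × ℂ), gt p.1 p.2 = 0)

/-- The `k`-th coordinate direction in `ℂⁿ × ℂ`. -/
noncomputable def dirCT (n : ℕ) (k : Fin (n + 1)) : (Fin n → ℂ) × ℂ :=
  if h : (k : ℕ) < n then (Pi.single ⟨k, h⟩ 1, 0) else (0, 1)

/-- `M` is holomorphically nondegenerate at `0`: for some `K`, the map
`(χ,τ) ↦ (∂_z^α Q(0,χ,τ))_{|α| ≤ K}` has generic rank `n+1`. -/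
def HolNondeg (Q : (Fin n → ℂ) → (Fin n → ℂ) → ℂ → ℂ) : Prop :=
  ∃ K : ℕ, ∃ A : Fin (n + 1) → Fin n → ℕ, (∀ j, (∑ i, A j i) ≤ K) ∧
    ¬ ∀ᶠ p in 𝓝 (0 : (Fin n → ℂ) × ℂ),
      (Matrix.of fun j k : Fin (n + 1) =>
        fderiv ℂ (fun q : (Fin n → ℂ) × ℂ => mpd (A j) (fun z => Q z q.1 q.2) 0) p
          (dirCT n k)).det = 0

/-- `M` is of class `𝒞` at `0`: for some `K`, the map
`χ ↦ (∂_z^α Q(0,χ,0))_{|α| ≤ K}` has generic rank `n`. -/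
def ClassC (Q : (Fin n → ℂ) → (Fin n → ℂ) → ℂ → ℂ) : Prop :=
  ∃ K : ℕ, ∃ A : Fin n → Fin n → ℕ, (∀ j, (∑ i, A j i) ≤ K) ∧
    ¬ ∀ᶠ χ in 𝓝 (0 : Fin n → ℂ),
      (Matrix.of fun j k : Fin n =>
        pd k (fun χ' => mpd (A j) (fun z => Q z χ' 0) 0) χ).det = 0

/-- `M` is finitely nondegenerate at `0`: for some `K`, the vectors
`∂_χ ∂_z^α Q(0,0,0)`, `|α| ≤ K`, span `ℂⁿ`. -/
def FinNondeg (Q : (Fin n → ℂ) → (Fin n → ℂ) → ℂ → ℂ) : Prop :=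
  ∃ K : ℕ, Submodule.span ℂ
    {v : Fin n → ℂ | ∃ α : Fin n → ℕ, (∑ i, α i) ≤ K ∧
      v = fun i => pd i (fun χ => mpd α (fun z => Q z χ 0) 0) 0} = ⊤

/-- Full Jacobian matrix of `(z,w) ↦ (f(z,w), g(z,w))` at `p ∈ ℂⁿ × ℂ`. -/
noncomputable def jacFull (f : (Fin n → ℂ) → ℂ → Fin n → ℂ) (g : (Fin n → ℂ) → ℂ → ℂ)
    (p : (Fin n → ℂ) × ℂ) : Matrix (Fin (n + 1)) (Fin (n + 1)) ℂ :=
  Matrix.of fun i k =>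
    fderiv ℂ (fun q : (Fin n → ℂ) × ℂ => (Fin.snoc (f q.1 q.2) (g q.1 q.2) : Fin (n + 1) → ℂ) i) p (dirCT n k)

/-- The degree-`d` homogeneous term of the Taylor series of `φ` at `0`. -/
noncomputable def homogTerm (d : ℕ) (φ : (Fin n → ℂ) → ℂ) : (Fin n → ℂ) → ℂ :=
  fun z => iteratedFDeriv ℂ d φ 0 (fun _ => z) / (d.factorial : ℂ)

/-- The order of vanishing of `φ` at `0`. -/
noncomputable def vanishOrder (φ : (Fin n → ℂ) → ℂ) : ℕ :=
  sInf {d | homogTerm d φ ≠ 0}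

theorem mul_eventually_eq_zero {E : Type*} [NormedAddCommGroup E] [NormedSpace ℂ E]
    {u v : E → ℂ} (hu : AnalyticAt ℂ u 0) (hv : AnalyticAt ℂ v 0)
    (h : ∀ᶠ x in 𝓝 (0 : E), u x * v x = 0) :
    (∀ᶠ x in 𝓝 (0 : E), u x = 0) ∨ ∀ᶠ x in 𝓝 (0 : E), v x = 0 := by
  obtain ⟨r, hr, hball⟩ := Metric.eventually_nhds_iff_ball.1
    ((hu.eventually_analyticAt.and hv.eventually_analyticAt).and h)
  by_cases hz : ∀ x ∈ Metric.ball (0 : E) r, u x = 0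
  · exact Or.inl (Metric.eventually_nhds_iff_ball.2 ⟨r, hr, hz⟩)
  · right
    push Not at hz
    obtain ⟨x, hx, hux⟩ := hz
    have hvA : AnalyticOnNhd ℂ v (Metric.ball 0 r) := fun y hy => (hball y hy).1.2
    have hpre : IsPreconnected (Metric.ball (0 : E) r) := by
      let : NormedSpace ℝ E := NormedSpace.restrictScalars ℝ ℂ E
      exact (convex_ball (0 : E) r).isPreconnected
    have hvx : v =ᶠ[𝓝 x] 0 := by
      filter_upwards [(hball x hx).1.1.continuousAt.eventually_ne hux,
        Metric.isOpen_ball.mem_nhds hx] with y hy hyr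
      exact (mul_eq_zero.1 (hball y hyr).2).resolve_left hy
    have := hvA.eqOn_zero_of_preconnected_of_eventuallyEq_zero hpre hx hvx
    exact Metric.eventually_nhds_iff_ball.2 ⟨r, hr, fun y hy => this hy⟩

/-- The power series of the quotient `(F x - F (P x)) / ℓ x`, where `x - P x = ℓ x • e`. -/
noncomputable def quotSeries {V : Type*} [NormedAddCommGroup V] [NormedSpace ℂ V]
    (p : FormalMultilinearSeries ℂ V ℂ) (P : V →L[ℂ] V) (e : V) :
    FormalMultilinearSeries ℂ V ℂ := fun n =>
  ∑ i : Fin (n + 1), ((p (n + 1)).curryMid i e).compContinuousLinearMap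
    (fun j : Fin n => if j.castSucc < i then P else ContinuousLinearMap.id ℂ V)

theorem quotSeries_apply {V : Type*} [NormedAddCommGroup V] [NormedSpace ℂ V]
    (p : FormalMultilinearSeries ℂ V ℂ) (P : V →L[ℂ] V) (e x : V) (c : ℂ)
    (hx : x - P x = c • e) (n : ℕ) :
    c * quotSeries p P e n (fun _ => x)
      = p (n + 1) (fun _ => x) - p (n + 1) (fun _ => P x) := by
  let T : ℕ → ℂ := fun k => p (n + 1) (fun j : Fin (n + 1) => if (j : ℕ) < k then P x else x)
  have hT : ∀ i : Fin (n + 1), c * ((p (n + 1)).curryMid i e).compContinuousLinearMap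
      (fun j : Fin n => if j.castSucc < i then P else ContinuousLinearMap.id ℂ V) (fun _ => x)
      = T i - T (i + 1) := by
    intro i
    have h1 : c * ((p (n + 1)).curryMid i e).compContinuousLinearMap
        (fun j : Fin n => if j.castSucc < i then P else ContinuousLinearMap.id ℂ V) (fun _ => x)
        = p (n + 1) (Function.update (fun j : Fin (n + 1) => if j < i then P x else x) i
          (c • e)) := by
      rw [ContinuousMultilinearMap.map_update_smul, smul_eq_mul]
      congr 1
      simp only [ContinuousMultilinearMap.compContinuousLinearMap_apply,
        ContinuousMultilinearMap.curryMid_apply]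
      congr 1
      ext j
      refine Fin.succAboveCases i ?_ (fun k => ?_) j
      · simp
      · rw [Fin.insertNth_apply_succAbove, Function.update_of_ne (Fin.succAbove_ne i k)]
        by_cases hk : k.castSucc < i
        · simp [hk, Fin.succAbove_of_castSucc_lt i k hk]
        · have : ¬ k.succ < i := fun h => hk (lt_trans (Fin.castSucc_lt_succ) h)
          simp [hk, Fin.succAbove_of_le_castSucc i k (not_lt.1 hk), this]
    rw [h1, ← hx, ContinuousMultilinearMap.map_update_sub]
    congr 2
    · ext j
      by_cases hj : j = i
      · subst hj; simp
      · rw [Function.update_of_ne hj]; simp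
    · ext j
      by_cases hj : j = i
      · subst hj; simp
      · rw [Function.update_of_ne hj]
        have : (j : ℕ) ≠ i := fun h => hj (Fin.ext h)
        have h2 : (j : ℕ) < i + 1 ↔ j < i := by rw [Fin.lt_def]; omega
        simp only [h2]
  simp only [quotSeries, sum_apply, Finset.mul_sum]
  rw [Finset.sum_congr rfl fun i _ => hT i,
    Fin.sum_univ_eq_sum_range (fun k => T k - T (k + 1)) (n + 1), Finset.sum_range_sub']
  congr 1
  exact congrArg _ (funext fun j => if_pos j.isLt)

theorem quotSeries_radius_pos {V : Type*} [NormedAddCommGroup V] [NormedSpace ℂ V]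
    (p : FormalMultilinearSeries ℂ V ℂ) (hp : 0 < p.radius) (P : V →L[ℂ] V) (hP : ‖P‖ ≤ 1)
    (e : V) : 0 < (quotSeries p P e).radius := by
  obtain ⟨C, a, hC, ha, hpa⟩ := p.le_mul_pow_of_radius_pos hp
  have hb : ∀ n, ‖quotSeries p P e n‖ ≤ (C * a * ‖e‖) * (2 * a) ^ n := by
    intro n
    have h1 : ∀ i : Fin (n + 1), ‖((p (n + 1)).curryMid i e).compContinuousLinearMap
        (fun j : Fin n => if j.castSucc < i then P else ContinuousLinearMap.id ℂ V)‖
        ≤ C * a ^ (n + 1) * ‖e‖ := by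
      intro i
      refine (ContinuousMultilinearMap.norm_compContinuousLinearMap_le _ _).trans ?_
      have h2 : ‖(p (n + 1)).curryMid i e‖ ≤ C * a ^ (n + 1) * ‖e‖ := by
        refine (ContinuousLinearMap.le_opNorm _ _).trans ?_
        gcongr
        rw [ContinuousMultilinearMap.norm_curryMid]
        exact hpa _
      refine (mul_le_of_le_one_right (norm_nonneg _) ?_).trans h2
      refine Finset.prod_le_one (fun _ _ => norm_nonneg _) (fun j _ => ?_)
      split_ifs
      · exact hP
      · exact ContinuousLinearMap.norm_id_le
    calc ‖quotSeries p P e n‖ ≤ ∑ i : Fin (n + 1), C * a ^ (n + 1) * ‖e‖ :=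
          norm_sum_le_of_le _ fun i _ => h1 i
      _ = (n + 1) * (C * a ^ (n + 1) * ‖e‖) := by simp
      _ ≤ 2 ^ n * (C * a ^ (n + 1) * ‖e‖) := by
          gcongr
          exact_mod_cast Nat.lt_two_pow_self
      _ = _ := by rw [mul_pow, pow_succ]; ring
  let r : NNReal := ⟨(2 * a)⁻¹, by positivity⟩
  have hr : 0 < r := by
    change (0 : ℝ) < (2 * a)⁻¹
    positivity
  refine lt_of_lt_of_le (ENNReal.coe_pos.2 hr)
    ((quotSeries p P e).le_radius_of_bound (C * a * ‖e‖) fun n => ?_)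
  refine (mul_le_mul_of_nonneg_right (hb n) (by positivity)).trans ?_
  have : (r : ℝ) = (2 * a)⁻¹ := rfl
  rw [this, inv_pow, mul_assoc, mul_inv_cancel₀ (by positivity), mul_one]

theorem exists_eq_snd_mul {F : ℂ × ℂ → ℂ} (hF : AnalyticAt ℂ F 0)
    (h0 : ∀ᶠ z in 𝓝 (0 : ℂ), F (z, 0) = 0) :
    ∃ G : ℂ × ℂ → ℂ, AnalyticAt ℂ G 0 ∧ ∀ᶠ x in 𝓝 (0 : ℂ × ℂ), F x = x.2 * G x := by
  obtain ⟨p, R, hp⟩ := hF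
  let P : ℂ × ℂ →L[ℂ] ℂ × ℂ := (ContinuousLinearMap.fst ℂ ℂ ℂ).prod 0
  have hP : ‖P‖ ≤ 1 := by
    refine ContinuousLinearMap.opNorm_le_bound _ zero_le_one fun x => ?_
    simp [P, Prod.norm_def]
  let S := quotSeries p P (0, 1)
  have hS : 0 < S.radius :=
    quotSeries_radius_pos p (hp.r_pos.trans_le hp.r_le) P hP _
  have hsum := S.hasFPowerSeriesOnBall hS
  refine ⟨S.sum, hsum.analyticAt, ?_⟩
  have hP0 : Tendsto P (𝓝 0) (𝓝 0) := by simpa using P.continuous.tendsto 0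
  have hR : ∀ᶠ x in 𝓝 (0 : ℂ × ℂ), x ∈ Metric.eball (0 : ℂ × ℂ) R :=
    Metric.eball_mem_nhds _ hp.r_pos
  filter_upwards [hR, hP0.eventually hR, Metric.eball_mem_nhds (0 : ℂ × ℂ) hS,
    (continuous_fst.tendsto' (0 : ℂ × ℂ) 0 rfl).eventually h0] with x hx hPx hxS hx0
  have hFx := hp.hasSum hx
  have hFP := hp.hasSum hPx
  have hG := (hsum.hasSum hxS).mul_left x.2
  simp only [zero_add] at hFx hFP hG
  have hdiff := hFx.sub hFP
  have h3 : F (P x) = 0 := hx0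
  rw [h3, sub_zero] at hdiff
  rw [← hasSum_nat_add_iff' 1] at hdiff
  have hz : ∀ n, x.2 * S n (fun _ => x) = p (n + 1) (fun _ => x) - p (n + 1) (fun _ => P x) :=
    quotSeries_apply p P (0, 1) x x.2 (by ext <;> simp [P])
  simp only [hz] at hG
  have h4 : p 0 (fun _ => x) - p 0 (fun _ => P x) = 0 := by
    rw [sub_eq_zero]; exact congrArg (p 0) (Subsingleton.elim _ _)
  simp only [Finset.sum_range_one, h4, sub_zero] at hdiff
  exact hdiff.unique hG

theorem eventually_eq_zero_of_forall_pow {F : ℂ × ℂ → ℂ} (hF : AnalyticAt ℂ F 0)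
    (h : ∀ k : ℕ, ∃ G : ℂ × ℂ → ℂ, AnalyticAt ℂ G 0 ∧
      ∀ᶠ x in 𝓝 (0 : ℂ × ℂ), F x = x.2 ^ k * G x) :
    ∀ᶠ x in 𝓝 (0 : ℂ × ℂ), F x = 0 := by
  obtain ⟨r, hr, hball⟩ := Metric.eventually_nhds_iff_ball.1 hF.eventually_analyticAt
  refine Metric.eventually_nhds_iff_ball.2 ⟨r / 2, by positivity, fun y hy => ?_⟩
  have hlin : ∀ t : ℂ, AnalyticAt ℂ (fun t : ℂ => t • y) t := fun t => by fun_prop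
  have ht : Tendsto (fun t : ℂ => t • y) (𝓝 0) (𝓝 0) :=
    (hlin 0).continuousAt.tendsto.trans (by simp)
  have hA : AnalyticOnNhd ℂ (fun t : ℂ => F (t • y)) (Metric.ball 0 2) := by
    intro t htb
    refine AnalyticAt.fun_comp (g := F) (f := fun t : ℂ => t • y) (hball (t • y) ?_) (hlin t)
    rw [mem_ball_zero_iff] at *
    rw [norm_smul]
    nlinarith [norm_nonneg y, norm_nonneg t]
  have htop : analyticOrderAt (fun t : ℂ => F (t • y)) 0 = ⊤ := by
    refine ENat.eq_top_iff_forall_ge.2 fun k => ?_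
    obtain ⟨G, hG, hFG⟩ := h k
    rw [natCast_le_analyticOrderAt (hA 0 (by simp))]
    refine ⟨fun t => y.2 ^ k * G (t • y), ?_, ?_⟩
    · refine analyticAt_const.mul (AnalyticAt.fun_comp ?_ (hlin 0))
      simpa using hG
    · filter_upwards [ht.eventually hFG] with t h1
      rw [h1]; simp [mul_pow, mul_assoc]
  rw [analyticOrderAt_eq_top] at htop
  have := hA.eqOn_zero_of_preconnected_of_eventuallyEq_zero
    (convex_ball (0 : ℂ) 2).isPreconnected (by simp) htop (x := (1 : ℂ)) (by simp)
  simpa using this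

theorem exists_eq_snd_pow_mul {F : ℂ × ℂ → ℂ} (hF : AnalyticAt ℂ F 0)
    (h0 : ¬ ∀ᶠ x in 𝓝 (0 : ℂ × ℂ), F x = 0) :
    ∃ (k : ℕ) (G : ℂ × ℂ → ℂ), AnalyticAt ℂ G 0 ∧
      (∀ᶠ x in 𝓝 (0 : ℂ × ℂ), F x = x.2 ^ k * G x) ∧
      ¬ ∀ᶠ z in 𝓝 (0 : ℂ), G (z, 0) = 0 := by
  by_contra! hcon
  refine h0 (eventually_eq_zero_of_forall_pow hF fun k => ?_)
  induction k with
  | zero => exact ⟨F, hF, by simp⟩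
  | succ k ih =>
    obtain ⟨G, hG, hFG⟩ := ih
    obtain ⟨G', hG', hGG'⟩ := exists_eq_snd_mul hG (hcon k G hG hFG)
    refine ⟨G', hG', ?_⟩
    filter_upwards [hFG, hGG'] with x h1 h2
    rw [h1, h2]; ring

theorem not_eventually_comp_eq_zero {φ u : ℂ → ℂ} (hu : AnalyticAt ℂ u 0) (hu0 : u 0 = 0)
    (hu' : ¬ ∀ᶠ z in 𝓝 (0 : ℂ), u z = 0) (hφ' : ¬ ∀ᶠ z in 𝓝 (0 : ℂ), φ z = 0) :
    ¬ ∀ᶠ z in 𝓝 (0 : ℂ), φ (u z) = 0 := by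
  intro h
  rcases hu.eventually_constant_or_nhds_le_map_nhds with h1 | h1
  · exact hu' (by simpa [hu0] using h1)
  · rw [hu0] at h1
    exact hφ' (h1 h)

/-- Factoring out of three germs the largest common power of the variable. -/
theorem exists_common_pow_factor {p₀ p₁ p₂ : ℂ → ℂ} (h₀ : AnalyticAt ℂ p₀ 0)
    (h₁ : AnalyticAt ℂ p₁ 0) (h₂ : AnalyticAt ℂ p₂ 0) (hne : ¬ ∀ᶠ t in 𝓝 (0 : ℂ), p₀ t = 0) :
    ∃ (v : ℕ) (P₀ P₁ P₂ : ℂ → ℂ), AnalyticAt ℂ P₀ 0 ∧ AnalyticAt ℂ P₁ 0 ∧ AnalyticAt ℂ P₂ 0 ∧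
      (∀ᶠ t in 𝓝 (0 : ℂ), p₀ t = t ^ v * P₀ t ∧ p₁ t = t ^ v * P₁ t ∧ p₂ t = t ^ v * P₂ t) ∧
      ¬ (P₀ 0 = 0 ∧ P₁ 0 = 0 ∧ P₂ 0 = 0) := by
  have key : ∀ u : ℂ → ℂ, AnalyticAt ℂ u 0 → ∀ n : ℕ, n ≤ analyticOrderAt u 0 →
      ∃ U : ℂ → ℂ, AnalyticAt ℂ U 0 ∧ (∀ᶠ t in 𝓝 (0 : ℂ), u t = t ^ n * U t) := by
    intro u hu n hn
    obtain ⟨U, hU, hUe⟩ := (natCast_le_analyticOrderAt hu).1 hn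
    exact ⟨U, hU, by simpa using hUe⟩
  have key2 : ∀ u U : ℂ → ℂ, AnalyticAt ℂ u 0 → AnalyticAt ℂ U 0 → ∀ n : ℕ,
      (∀ᶠ t in 𝓝 (0 : ℂ), u t = t ^ n * U t) → U 0 = 0 → n + 1 ≤ analyticOrderAt u 0 := by
    intro u U hu hU n hn hU0
    have h1 : 1 ≤ analyticOrderAt U 0 :=
      Order.one_le_iff_ne_zero.2 (hU.analyticOrderAt_ne_zero.2 hU0)
    obtain ⟨W, hW, hWe⟩ := key U hU 1 (by simpa using h1)
    have := (natCast_le_analyticOrderAt hu (n := n + 1)).2 ⟨W, hW, by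
      filter_upwards [hn, hWe] with t ht1 ht2
      rw [ht1, ht2]; simp; ring⟩
    exact_mod_cast this
  have hne' : analyticOrderAt p₀ 0 ≠ ⊤ := fun h => hne (analyticOrderAt_eq_top.1 h)
  let N := min (analyticOrderAt p₀ 0) (min (analyticOrderAt p₁ 0) (analyticOrderAt p₂ 0))
  have hN : N ≠ ⊤ := fun h => hne' (by simpa [N] using (min_eq_top.1 h).1)
  obtain ⟨v, hv⟩ := ENat.ne_top_iff_exists.1 hN
  have hv0 : (v : ℕ∞) ≤ analyticOrderAt p₀ 0 := hv.trans_le (min_le_left _ _)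
  have hv1 : (v : ℕ∞) ≤ analyticOrderAt p₁ 0 :=
    hv.trans_le ((min_le_right _ _).trans (min_le_left _ _))
  have hv2 : (v : ℕ∞) ≤ analyticOrderAt p₂ 0 :=
    hv.trans_le ((min_le_right _ _).trans (min_le_right _ _))
  obtain ⟨P₀, hP₀, e₀⟩ := key p₀ h₀ v hv0
  obtain ⟨P₁, hP₁, e₁⟩ := key p₁ h₁ v hv1
  obtain ⟨P₂, hP₂, e₂⟩ := key p₂ h₂ v hv2
  refine ⟨v, P₀, P₁, P₂, hP₀, hP₁, hP₂, e₀.and (e₁.and e₂), ?_⟩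
  rintro ⟨z₀, z₁, z₂⟩
  have : (v : ℕ∞) + 1 ≤ N := le_min (key2 _ _ h₀ hP₀ v e₀ z₀)
    (le_min (key2 _ _ h₁ hP₁ v e₁ z₁) (key2 _ _ h₂ hP₂ v e₂ z₂))
  rw [← hv] at this
  exact absurd (by exact_mod_cast this : v + 1 ≤ v) (by omega)

theorem not_eventually_pow_eq_zero (k : ℕ) : ¬ ∀ᶠ t in 𝓝 (0 : ℂ), t ^ k = 0 := by
  intro h
  have h1 : ∀ᶠ t in 𝓝[≠] (0 : ℂ), False := by
    filter_upwards [h.filter_mono nhdsWithin_le_nhds, self_mem_nhdsWithin] with t ht hne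
    exact hne (eq_zero_of_pow_eq_zero ht)
  exact h1.exists.elim fun _ h => h

theorem eventually_eq_zero_of_snd_pow_mul {D : ℂ × ℂ → ℂ} (hD : AnalyticAt ℂ D 0) {k : ℕ}
    (h : ∀ᶠ x in 𝓝 (0 : ℂ × ℂ), x.2 ^ k * D x = 0) : ∀ᶠ x in 𝓝 (0 : ℂ × ℂ), D x = 0 := by
  refine (mul_eventually_eq_zero (analyticAt_snd.pow k) hD h).resolve_left fun h1 => ?_
  have ht : Tendsto (fun t : ℂ => ((0, t) : ℂ × ℂ)) (𝓝 0) (𝓝 0) :=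
    (by fun_prop : Continuous fun t : ℂ => ((0, t) : ℂ × ℂ)).tendsto' _ _ rfl
  exact not_eventually_pow_eq_zero k (ht.eventually h1)

theorem tendsto_pair_zero : Tendsto (fun z : ℂ => ((z, 0) : ℂ × ℂ)) (𝓝 0) (𝓝 0) :=
  (by fun_prop : Continuous fun z : ℂ => ((z, 0) : ℂ × ℂ)).tendsto' _ _ rfl

theorem analyticAt_pair_zero {F : ℂ × ℂ → ℂ} (hF : AnalyticAt ℂ F 0) :
    AnalyticAt ℂ (fun z : ℂ => F (z, 0)) 0 :=
  AnalyticAt.fun_comp (g := F) (f := fun z : ℂ => ((z, 0) : ℂ × ℂ)) hF (by fun_prop)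

theorem analyticAt_comp_snd {P : ℂ → ℂ} (hP : AnalyticAt ℂ P 0) :
    AnalyticAt ℂ (fun x : ℂ × ℂ => P x.2) 0 :=
  AnalyticAt.fun_comp_of_eq hP analyticAt_snd rfl

theorem exists_leading_relation {α β γ : ℂ × ℂ → ℂ} {p₀ p₁ p₂ : ℂ → ℂ}
    (hα : AnalyticAt ℂ α 0) (hβ : AnalyticAt ℂ β 0) (hγ : AnalyticAt ℂ γ 0)
    (h₀ : AnalyticAt ℂ p₀ 0) (h₁ : AnalyticAt ℂ p₁ 0) (h₂ : AnalyticAt ℂ p₂ 0)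
    (hne : ¬ ∀ᶠ t in 𝓝 (0 : ℂ), p₀ t = 0)
    (h : ∀ᶠ x in 𝓝 (0 : ℂ × ℂ), p₀ x.2 * α x = p₁ x.2 * β x + p₂ x.2 * γ x) :
    ∃ a₀ a₁ a₂ : ℂ, ¬ (a₀ = 0 ∧ a₁ = 0 ∧ a₂ = 0) ∧
      ∀ᶠ z in 𝓝 (0 : ℂ), a₀ * α (z, 0) = a₁ * β (z, 0) + a₂ * γ (z, 0) := by
  obtain ⟨v, P₀, P₁, P₂, hP₀, hP₁, hP₂, he, hP⟩ := exists_common_pow_factor h₀ h₁ h₂ hne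
  refine ⟨P₀ 0, P₁ 0, P₂ 0, hP, ?_⟩
  have hD : AnalyticAt ℂ (fun x : ℂ × ℂ => P₀ x.2 * α x - P₁ x.2 * β x - P₂ x.2 * γ x) 0 :=
    (((analyticAt_comp_snd hP₀).mul hα).sub
      ((analyticAt_comp_snd hP₁).mul hβ)).sub
      ((analyticAt_comp_snd hP₂).mul hγ)
  have hD0 := eventually_eq_zero_of_snd_pow_mul (k := v) hD (by
    filter_upwards [h, (continuous_snd.tendsto' (0 : ℂ × ℂ) 0 rfl).eventually he] with x hx hx'
    obtain ⟨h0, h1, h2⟩ := hx'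
    rw [h0, h1, h2] at hx
    linear_combination hx)
  filter_upwards [tendsto_pair_zero.eventually hD0] with z hz
  linear_combination hz

theorem eq_one_of_leading_relation {H G K : ℂ → ℂ} (hH : AnalyticAt ℂ H 0)
    (hG : AnalyticAt ℂ G 0) (hK : AnalyticAt ℂ K 0) (hH0 : H 0 = 0)
    (hH' : ¬ ∀ᶠ z in 𝓝 (0 : ℂ), H z = 0) (hG' : ¬ ∀ᶠ z in 𝓝 (0 : ℂ), G z = 0)
    (hK' : ¬ ∀ᶠ z in 𝓝 (0 : ℂ), K z = 0) {m r : ℕ} (hm : m ≠ 0) (hr : r ≠ 0) {a₀ a₁ a₂ : ℂ}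
    (ha : ¬ (a₀ = 0 ∧ a₁ = 0 ∧ a₂ = 0))
    (h : ∀ᶠ z in 𝓝 (0 : ℂ), a₀ * (m * H z ^ m * G z * K z) =
      a₁ * (r * H z ^ (m + 1) * G z * K z) + a₂ * (H z * K z)) :
    m = 1 ∧ G 0 ≠ 0 := by
  obtain ⟨k, rfl⟩ := Nat.exists_eq_add_one_of_ne_zero hm
  have h1 : ∀ᶠ z in 𝓝 (0 : ℂ), H z ^ k * G z * (a₀ * (k + 1) - a₁ * r * H z) - a₂ = 0 := by
    have hKc := (mul_eventually_eq_zero (u := K) (v := fun z => H z *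
      (H z ^ k * G z * (a₀ * (k + 1) - a₁ * r * H z) - a₂)) hK (by fun_prop) (by
        filter_upwards [h] with z hz
        push_cast at hz
        linear_combination hz)).resolve_left hK'
    exact (mul_eventually_eq_zero (u := H) hH (by fun_prop) hKc).resolve_left hH'
  by_contra hcon
  have h2 : a₂ = 0 := by
    have := h1.self_of_nhds
    rw [hH0] at this
    by_cases hk : k = 0
    · have hG0 : G 0 = 0 := by
        by_contra hG0
        exact hcon ⟨by simp [hk], hG0⟩
      rw [hG0] at this
      linear_combination -this
    · rw [zero_pow hk] at this
      linear_combination -this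
  have h3 : ∀ᶠ z in 𝓝 (0 : ℂ), a₀ * (k + 1) - a₁ * r * H z = 0 := by
    have hGc := (mul_eventually_eq_zero (u := G) (v := fun z => H z ^ k *
      (a₀ * (k + 1) - a₁ * r * H z)) hG (by fun_prop) (by
        filter_upwards [h1] with z hz
        linear_combination hz + h2)).resolve_left hG'
    refine (mul_eventually_eq_zero (u := fun z => H z ^ k) (by fun_prop) (by fun_prop)
      hGc).resolve_left fun hp => hH' ?_
    filter_upwards [hp] with z hz using eq_zero_of_pow_eq_zero hz
  have h4 : a₀ = 0 := by
    have := h3.self_of_nhds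
    rw [hH0, mul_zero, sub_zero] at this
    exact (mul_eq_zero.1 this).resolve_right (Nat.cast_add_one_ne_zero k)
  refine ha ⟨h4, by_contra fun h5 => hH' ?_, h2⟩
  filter_upwards [h3] with z hz
  have h6 : a₁ * r * H z = 0 := by linear_combination (k + 1) * h4 - hz
  exact (mul_eq_zero.1 h6).resolve_left (mul_ne_zero h5 (Nat.cast_ne_zero.2 hr))

theorem fderiv_snd_pow_mul {F G : ℂ × ℂ → ℂ} {k : ℕ} {x : ℂ × ℂ} (hG : DifferentiableAt ℂ G x)
    (h : F =ᶠ[𝓝 x] fun y => y.2 ^ k * G y) :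
    fderiv ℂ F x (1, 0) = x.2 ^ k * fderiv ℂ G x (1, 0) ∧
    x.2 * fderiv ℂ F x (0, 1) = x.2 ^ k * (k * G x + x.2 * fderiv ℂ G x (0, 1)) := by
  have hs : HasFDerivAt (fun y : ℂ × ℂ => y.2) (ContinuousLinearMap.snd ℂ ℂ ℂ) x :=
    hasFDerivAt_snd
  rw [h.fderiv_eq, HasFDerivAt.fderiv (f := fun y : ℂ × ℂ => y.2 ^ k * G y)
    ((hs.pow k).mul hG.hasFDerivAt)]
  constructor
  · simp
  · rcases k with _ | k
    · simp
    · simp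
      ring

theorem analyticAt_fderiv_apply {E : Type*} [NormedAddCommGroup E] [NormedSpace ℂ E]
    {F : E → ℂ} {x : E} (hF : AnalyticAt ℂ F x) (v : E) :
    AnalyticAt ℂ (fun y => fderiv ℂ F y v) x :=
  AnalyticAt.fun_comp (g := ContinuousLinearMap.apply ℂ ℂ v)
    (ContinuousLinearMap.analyticAt _ _) hF.fderiv


theorem eq_of_comp_eq_const {u P : ℂ → ℂ} {U V : Set ℂ} {c z₀ z₁ : ℂ} (hu : AnalyticOnNhd ℂ u U)
    (hU : IsOpen U) (hU' : IsPreconnected U) (hP : AnalyticOnNhd ℂ P V) (hV : IsPreconnected V)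
    (huV : Set.MapsTo u U V) (hc : ∀ z ∈ U, P (u z) = c) (h₀ : z₀ ∈ U) (h₁ : z₁ ∈ U)
    (hne : u z₀ ≠ u z₁) {y : ℂ} (hy : y ∈ V) : P y = c := by
  rcases hu.is_constant_or_isOpen hU' with ⟨w, hw⟩ | ho
  · exact absurd ((hw z₀ h₀).trans (hw z₁ h₁).symm) hne
  · have hmem : u '' U ∈ 𝓝 (u z₀) := (ho U subset_rfl hU).mem_nhds ⟨z₀, h₀, rfl⟩
    refine hP.eqOn_of_preconnected_of_eventuallyEq (g := fun _ => c) analyticOnNhd_const hV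
      (huV h₀) ?_ hy
    filter_upwards [hmem]
    rintro _ ⟨z, hz, rfl⟩
    exact hc z hz

/-- A holomorphic family of level sets which is traced out by a nonconstant family of holomorphic
curves consists of everything. -/
theorem eventually_eq_or_eventually_eq {E F : Type*} [NormedAddCommGroup E] [NormedSpace ℂ E]
    [NormedAddCommGroup F] [NormedSpace ℂ F] {u : ℂ × E → ℂ} {P : ℂ × F → ℂ} {b : E → F}
    {c : E → ℂ} (hu : AnalyticAt ℂ u 0) (hu0 : u 0 = 0) (hP : AnalyticAt ℂ P 0)
    (hb : AnalyticAt ℂ b 0) (hb0 : b 0 = 0) (hc : AnalyticAt ℂ c 0)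
    (h : ∀ᶠ x in 𝓝 (0 : ℂ × E), P (u x, b x.2) = c x.2) :
    (∀ᶠ e in 𝓝 (0 : E), P (0, b e) = c e) ∨ ∀ᶠ x in 𝓝 (0 : ℂ × E), u x = u (0, x.2) := by
  have hPb : AnalyticAt ℂ (fun e => P (0, b e) - c e) 0 :=
    (AnalyticAt.fun_comp_of_eq (g := P) (f := fun e => (0, b e)) hP (analyticAt_const.prod hb)
      (Prod.ext rfl hb0)).fun_sub hc
  have hd : AnalyticAt ℂ (fun x : ℂ × E => u x - u (0, x.2)) 0 :=
    hu.fun_sub (AnalyticAt.fun_comp_of_eq (g := u) (f := fun x : ℂ × E => ((0, x.2) : ℂ × E)) hu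
      (analyticAt_const.prod analyticAt_snd) rfl)
  have hmul : ∀ᶠ x in 𝓝 (0 : ℂ × E), (P (0, b x.2) - c x.2) * (u x - u (0, x.2)) = 0 := by
    obtain ⟨R, hR, hPR⟩ := Metric.eventually_nhds_iff_ball.1 hP.eventually_analyticAt
    have tu : Tendsto u (𝓝 0) (𝓝 0) := by simpa [hu0] using hu.continuousAt.tendsto
    have tb : Tendsto b (𝓝 0) (𝓝 0) := by simpa [hb0] using hb.continuousAt.tendsto
    obtain ⟨r, hr, hball⟩ := Metric.eventually_nhds_iff_ball.1
      (((hu.eventually_analyticAt.and h).and (tu.eventually (Metric.ball_mem_nhds 0 hR))).and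
        ((continuous_snd.tendsto' (0 : ℂ × E) 0 rfl).eventually
          (tb.eventually (Metric.ball_mem_nhds 0 hR))))
    filter_upwards [Metric.ball_mem_nhds 0 hr] with x hx
    by_cases hx' : u x = u (0, x.2)
    · rw [hx', sub_self, mul_zero]
    have hxr : x.1 ∈ Metric.ball (0 : ℂ) r ∧ x.2 ∈ Metric.ball (0 : E) r := by
      simpa [Prod.norm_def] using hx
    have hin : ∀ z ∈ Metric.ball (0 : ℂ) r, (z, x.2) ∈ Metric.ball (0 : ℂ × E) r := by
      intro z hz
      simpa [Prod.norm_def] using ⟨mem_ball_zero_iff.1 hz, mem_ball_zero_iff.1 hxr.2⟩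
    have key : P (0, b x.2) = c x.2 := by
      refine eq_of_comp_eq_const (u := fun z => u (z, x.2)) (P := fun y => P (y, b x.2))
        (U := Metric.ball 0 r) (V := Metric.ball 0 R) (z₀ := x.1) (z₁ := 0) ?_
        Metric.isOpen_ball (convex_ball _ _).isPreconnected ?_ (convex_ball _ _).isPreconnected
        (fun z hz => (hball _ (hin z hz)).1.2) (fun z hz => (hball _ (hin z hz)).1.1.2) hxr.1
        (Metric.mem_ball_self hr) hx' (Metric.mem_ball_self hR)
      · exact fun z hz => AnalyticAt.fun_comp (g := u) (f := fun z => (z, x.2))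
          (hball _ (hin z hz)).1.1.1 (analyticAt_id.prod analyticAt_const)
      · intro y hy
        refine AnalyticAt.fun_comp (g := P) (f := fun y => (y, b x.2)) (hPR _ ?_)
          (analyticAt_id.prod analyticAt_const)
        simpa [Prod.norm_def] using ⟨mem_ball_zero_iff.1 hy,
          mem_ball_zero_iff.1 (hball x hx).2⟩
    rw [key, sub_self, zero_mul]
  rcases mul_eventually_eq_zero (AnalyticAt.fun_comp_of_eq hPb analyticAt_snd rfl) hd hmul
    with h1 | h1
  · left
    have ht : Tendsto (fun e : E => ((0, e) : ℂ × E)) (𝓝 0) (𝓝 0) :=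
      (by fun_prop : Continuous fun e : E => ((0, e) : ℂ × E)).tendsto' _ _ rfl
    exact (ht.eventually h1).mono fun e he => sub_eq_zero.1 he
  · exact .inr (h1.mono fun x hx => sub_eq_zero.1 hx)

theorem eventually_eq_zero_of_comp {F p : ℂ × ℂ → ℂ} (hF : AnalyticAt ℂ F 0)
    (hp : AnalyticAt ℂ p 0) (hp0 : ∀ᶠ z in 𝓝 (0 : ℂ), p (z, 0) = 0)
    (hp' : ¬ ∀ᶠ x in 𝓝 (0 : ℂ × ℂ), p x = 0)
    (h : ∀ᶠ x in 𝓝 (0 : ℂ × ℂ), F (x.1, p x) = 0) : ∀ᶠ x in 𝓝 (0 : ℂ × ℂ), F x = 0 := by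
  by_contra hne
  obtain ⟨k, G, hG, hFG, hG0⟩ := exists_eq_snd_pow_mul hF hne
  have p0 : p 0 = 0 := hp0.self_of_nhds
  have aw : AnalyticAt ℂ (fun x : ℂ × ℂ => (x.1, p x)) 0 := analyticAt_fst.prod hp
  have tw : Tendsto (fun x : ℂ × ℂ => (x.1, p x)) (𝓝 0) (𝓝 0) := by
    simpa [p0, Prod.mk_zero_zero] using aw.continuousAt.tendsto
  have aG : AnalyticAt ℂ (fun x : ℂ × ℂ => G (x.1, p x)) 0 :=
    AnalyticAt.fun_comp_of_eq (g := G) hG aw (Prod.ext rfl p0)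
  rcases mul_eventually_eq_zero (hp.fun_pow k) aG (by
    filter_upwards [h, tw.eventually hFG] with x h1 h2
    rw [← h1, h2]) with h1 | h1
  · exact hp' (h1.mono fun x hx => eq_zero_of_pow_eq_zero hx)
  · refine hG0 ?_
    filter_upwards [tendsto_pair_zero.eventually h1, hp0] with z h2 h3
    simpa [h3] using h2

/-- A normal defining function can be solved for its last variable. -/
theorem exists_solution {Q : ℂ × ℂ × ℂ → ℂ} (hQ : AnalyticAt ℂ Q 0)
    (hn : ∀ᶠ p in 𝓝 (0 : ℂ × ℂ × ℂ), Q (0, p.2) = p.2.2 ∧ Q (p.1, 0, p.2.2) = p.2.2) :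
    ∃ R : ℂ × ℂ × ℂ → ℂ, AnalyticAt ℂ R 0 ∧
      (∀ᶠ p in 𝓝 (0 : ℂ × ℂ × ℂ), Q (p.1, p.2.1, R p) = p.2.2) ∧
      ∀ᶠ p in 𝓝 (0 : ℂ × ℂ × ℂ), R (0, p.2) = p.2.2 ∧ R (p.1, 0, p.2.2) = p.2.2 := by
  have hd := hQ.differentiableAt.hasFDerivAt
  have h1 : ∀ v : ℂ × ℂ, fderiv ℂ Q 0 (0, v) = v.2 := by
    intro v
    have hc : HasFDerivAt (fun v : ℂ × ℂ => ((0, v) : ℂ × ℂ × ℂ))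
        (ContinuousLinearMap.inr ℂ ℂ (ℂ × ℂ)) 0 :=
      (ContinuousLinearMap.inr ℂ ℂ (ℂ × ℂ)).hasFDerivAt
    have ht : Tendsto (fun v : ℂ × ℂ => ((0, v) : ℂ × ℂ × ℂ)) (𝓝 0) (𝓝 0) :=
      (by fun_prop : Continuous fun v : ℂ × ℂ => ((0, v) : ℂ × ℂ × ℂ)).tendsto' _ _ rfl
    have e1 : HasFDerivAt (fun v : ℂ × ℂ => Q (0, v)) _ 0 :=
      HasFDerivAt.comp (g := Q) (f := fun v : ℂ × ℂ => ((0, v) : ℂ × ℂ × ℂ)) 0 hd hc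
    have e2 : HasFDerivAt (fun v : ℂ × ℂ => Q (0, v)) (ContinuousLinearMap.snd ℂ ℂ ℂ) 0 :=
      hasFDerivAt_snd.congr_of_eventuallyEq ((ht.eventually hn).mono fun v hv => hv.1)
    exact DFunLike.congr_fun (e1.unique e2) v
  have h2 : ∀ z : ℂ, fderiv ℂ Q 0 (z, 0) = 0 := by
    intro z
    have hc : HasFDerivAt (fun v : ℂ => ((v, 0) : ℂ × ℂ × ℂ))
        (ContinuousLinearMap.inl ℂ ℂ (ℂ × ℂ)) 0 :=
      (ContinuousLinearMap.inl ℂ ℂ (ℂ × ℂ)).hasFDerivAt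
    have ht : Tendsto (fun v : ℂ => ((v, 0) : ℂ × ℂ × ℂ)) (𝓝 0) (𝓝 0) :=
      (by fun_prop : Continuous fun v : ℂ => ((v, 0) : ℂ × ℂ × ℂ)).tendsto' _ _ rfl
    have e1 : HasFDerivAt (fun v : ℂ => Q (v, 0)) _ 0 :=
      HasFDerivAt.comp (g := Q) (f := fun v : ℂ => ((v, 0) : ℂ × ℂ × ℂ)) 0 hd hc
    have e2 : HasFDerivAt (fun v : ℂ => Q (v, 0)) (0 : ℂ →L[ℂ] ℂ) 0 :=
      (hasFDerivAt_const (0 : ℂ) (0 : ℂ)).congr_of_eventuallyEq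
        ((ht.eventually hn).mono fun v hv => hv.2)
    exact DFunLike.congr_fun (e1.unique e2) z
  let Φ : ℂ × ℂ × ℂ → ℂ × ℂ × ℂ := fun p => (p.1, p.2.1, Q p)
  have hΦ : AnalyticAt ℂ Φ 0 :=
    analyticAt_fst.prod ((analyticAt_fst.comp_of_eq analyticAt_snd rfl).prod hQ)
  have hΦ0 : Φ 0 = 0 := Prod.ext rfl (Prod.ext rfl hn.self_of_nhds.1)
  have hΦ' : HasFDerivAt Φ
      (ContinuousLinearEquiv.refl ℂ (ℂ × ℂ × ℂ) : ℂ × ℂ × ℂ →L[ℂ] ℂ × ℂ × ℂ) 0 := by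
    have := (hasFDerivAt_fst (𝕜 := ℂ) (p := (0 : ℂ × ℂ × ℂ))).prodMk
      ((hasFDerivAt_fst.comp (0 : ℂ × ℂ × ℂ) hasFDerivAt_snd).prodMk hd)
    refine this.congr_fderiv (ContinuousLinearMap.ext fun v => ?_)
    have hv : fderiv ℂ Q 0 v = v.2.2 := by
      have : v = (v.1, 0) + (0, v.2) := by simp
      conv_lhs => rw [this, map_add, h1, h2, zero_add]
    exact Prod.ext rfl (Prod.ext rfl hv)
  have hs : HasStrictFDerivAt Φ
      (ContinuousLinearEquiv.refl ℂ (ℂ × ℂ × ℂ) : ℂ × ℂ × ℂ →L[ℂ] ℂ × ℂ × ℂ) 0 :=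
    hΦ'.fderiv ▸ hΦ.hasStrictFDerivAt
  set T := hs.localInverse Φ _ 0
  have hT : AnalyticAt ℂ T 0 := by
    have := (hs.toOpenPartialHomeomorph Φ).analyticAt_symm'
      hs.mem_toOpenPartialHomeomorph_source hΦ hΦ'.fderiv
    rwa [hs.toOpenPartialHomeomorph_coe, hΦ0] at this
  have hr : ∀ᶠ y in 𝓝 (0 : ℂ × ℂ × ℂ), Φ (T y) = y := hΦ0 ▸ hs.eventually_right_inverse
  have hl : ∀ᶠ y in 𝓝 (0 : ℂ × ℂ × ℂ), T (Φ y) = y := hs.eventually_left_inverse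
  refine ⟨fun p => (T p).2.2, ?_, ?_, ?_⟩
  · exact (analyticAt_snd.comp_of_eq analyticAt_snd rfl).comp_of_eq hT rfl
  · filter_upwards [hr] with p hp
    have e1 : (T p).1 = p.1 := congrArg (·.1) hp
    have e2 : (T p).2.1 = p.2.1 := congrArg (·.2.1) hp
    have e3 : Q (T p) = p.2.2 := congrArg (·.2.2) hp
    rw [← e3, ← e1, ← e2]
  · have t1 : Tendsto (fun p : ℂ × ℂ × ℂ => ((0, p.2) : ℂ × ℂ × ℂ)) (𝓝 0) (𝓝 0) :=
      (by fun_prop : Continuous fun p : ℂ × ℂ × ℂ => ((0, p.2) : ℂ × ℂ × ℂ)).tendsto' _ _ rfl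
    have t2 : Tendsto (fun p : ℂ × ℂ × ℂ => ((p.1, 0, p.2.2) : ℂ × ℂ × ℂ)) (𝓝 0) (𝓝 0) :=
      (by fun_prop : Continuous fun p : ℂ × ℂ × ℂ =>
        ((p.1, 0, p.2.2) : ℂ × ℂ × ℂ)).tendsto' _ _ rfl
    filter_upwards [hn, t1.eventually hl, t2.eventually hl] with p hp h3 h4
    constructor
    · have : Φ (0, p.2) = (0, p.2) := Prod.ext rfl (Prod.ext rfl hp.1)
      rw [this] at h3
      rw [h3]
    · have : Φ (p.1, 0, p.2.2) = (p.1, 0, p.2.2) := Prod.ext rfl (Prod.ext rfl hp.2)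
      rw [this] at h4
      rw [h4]

/-- A holomorphic Segre preserving map in dimension one, written in scalar coordinates. -/
structure ScalarHSPM (Q Q' : ℂ × ℂ × ℂ → ℂ) (f g ft gt : ℂ × ℂ → ℂ) : Prop where
  analytic_Q : AnalyticAt ℂ Q 0
  analytic_Q' : AnalyticAt ℂ Q' 0
  analytic_f : AnalyticAt ℂ f 0
  analytic_g : AnalyticAt ℂ g 0
  analytic_ft : AnalyticAt ℂ ft 0
  analytic_gt : AnalyticAt ℂ gt 0
  normal_Q : ∀ᶠ p in 𝓝 (0 : ℂ × ℂ × ℂ), Q (0, p.2) = p.2.2 ∧ Q (p.1, 0, p.2.2) = p.2.2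
  normal_Q' : ∀ᶠ p in 𝓝 (0 : ℂ × ℂ × ℂ), Q' (0, p.2) = p.2.2 ∧ Q' (p.1, 0, p.2.2) = p.2.2
  f_zero : f 0 = 0
  g_zero : g 0 = 0
  ft_zero : ft 0 = 0
  gt_zero : gt 0 = 0
  eq : ∀ᶠ p in 𝓝 (0 : ℂ × ℂ × ℂ), g (p.1, Q p) = Q' (f (p.1, Q p), ft p.2, gt p.2)

namespace ScalarHSPM

variable {Q Q' : ℂ × ℂ × ℂ → ℂ} {f g ft gt : ℂ × ℂ → ℂ}

theorem Q_zero (H : ScalarHSPM Q Q' f g ft gt) : Q 0 = 0 := H.normal_Q.self_of_nhds.1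

theorem tendsto_emb : Tendsto (fun x : ℂ × ℂ => ((x.1, x.2, 0) : ℂ × ℂ × ℂ)) (𝓝 0) (𝓝 0) :=
  (by fun_prop : Continuous fun x : ℂ × ℂ => ((x.1, x.2, 0) : ℂ × ℂ × ℂ)).tendsto' _ _ rfl

theorem tendsto_fst_emb : Tendsto (fun z : ℂ => ((z, 0, 0) : ℂ × ℂ × ℂ)) (𝓝 0) (𝓝 0) :=
  (by fun_prop : Continuous fun z : ℂ => ((z, 0, 0) : ℂ × ℂ × ℂ)).tendsto' _ _ rfl

theorem tendsto_mid_emb : Tendsto (fun z : ℂ => ((0, z, 0) : ℂ × ℂ × ℂ)) (𝓝 0) (𝓝 0) :=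
  (by fun_prop : Continuous fun z : ℂ => ((0, z, 0) : ℂ × ℂ × ℂ)).tendsto' _ _ rfl

theorem analyticAt_emb :
    AnalyticAt ℂ (fun x : ℂ × ℂ => ((x.1, x.2, 0) : ℂ × ℂ × ℂ)) 0 :=
  analyticAt_fst.prod (analyticAt_snd.prod analyticAt_const)

theorem analytic_q (H : ScalarHSPM Q Q' f g ft gt) :
    AnalyticAt ℂ (fun x : ℂ × ℂ => Q (x.1, x.2, 0)) 0 :=
  AnalyticAt.fun_comp_of_eq (g := Q) H.analytic_Q analyticAt_emb rfl

theorem analytic_q' (H : ScalarHSPM Q Q' f g ft gt) :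
    AnalyticAt ℂ (fun x : ℂ × ℂ => Q' (x.1, x.2, 0)) 0 :=
  AnalyticAt.fun_comp_of_eq (g := Q') H.analytic_Q' analyticAt_emb rfl

theorem q_fst (H : ScalarHSPM Q Q' f g ft gt) : ∀ᶠ z in 𝓝 (0 : ℂ), Q (z, 0, 0) = 0 := by
  filter_upwards [tendsto_fst_emb.eventually H.normal_Q] with z hz using hz.2

theorem q'_fst (H : ScalarHSPM Q Q' f g ft gt) : ∀ᶠ z in 𝓝 (0 : ℂ), Q' (z, 0, 0) = 0 := by
  filter_upwards [tendsto_fst_emb.eventually H.normal_Q'] with z hz using hz.2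

theorem tendsto_of_analyticAt {E F : Type*} [NormedAddCommGroup E] [NormedSpace ℂ E]
    [NormedAddCommGroup F] [NormedSpace ℂ F] {u : E → F} (hu : AnalyticAt ℂ u 0) (h0 : u 0 = 0) :
    Tendsto u (𝓝 0) (𝓝 0) := by
  simpa [h0] using hu.continuousAt.tendsto

theorem g_fst (H : ScalarHSPM Q Q' f g ft gt) : ∀ᶠ z in 𝓝 (0 : ℂ), g (z, 0) = 0 := by
  filter_upwards [H.q_fst, tendsto_fst_emb.eventually H.eq,
    (tendsto_of_analyticAt (analyticAt_pair_zero H.analytic_f) H.f_zero).eventually H.q'_fst]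
    with z h1 h2 h3
  have e1 : ft (0, 0) = 0 := H.ft_zero
  have e2 : gt (0, 0) = 0 := H.gt_zero
  simpa [h1, e1, e2, h3] using h2

theorem analytic_y (H : ScalarHSPM Q Q' f g ft gt) :
    AnalyticAt ℂ (fun x : ℂ × ℂ => (f (x.1, Q (x.1, x.2, 0)), ft (x.2, 0))) 0 := by
  refine AnalyticAt.prod ?_ ?_
  · exact AnalyticAt.fun_comp_of_eq (g := f) H.analytic_f (analyticAt_fst.prod H.analytic_q)
      (Prod.ext rfl H.Q_zero)
  · exact AnalyticAt.fun_comp_of_eq (g := ft) H.analytic_ft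
      (analyticAt_snd.prod analyticAt_const) rfl

theorem analytic_w (H : ScalarHSPM Q Q' f g ft gt) :
    AnalyticAt ℂ (fun x : ℂ × ℂ => (x.1, Q (x.1, x.2, 0))) 0 :=
  analyticAt_fst.prod H.analytic_q

theorem w_zero (H : ScalarHSPM Q Q' f g ft gt) :
    (fun x : ℂ × ℂ => (x.1, Q (x.1, x.2, 0))) 0 = 0 :=
  Prod.ext rfl H.Q_zero

theorem y_zero (H : ScalarHSPM Q Q' f g ft gt) :
    (fun x : ℂ × ℂ => (f (x.1, Q (x.1, x.2, 0)), ft (x.2, 0))) 0 = 0 := by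
  have h : ((0 : ℂ), Q (0, 0, 0)) = 0 := H.w_zero
  refine Prod.ext ?_ H.ft_zero
  change f (0, Q (0, 0, 0)) = 0
  rw [h]; exact H.f_zero

theorem tendsto_w (H : ScalarHSPM Q Q' f g ft gt) :
    Tendsto (fun x : ℂ × ℂ => (x.1, Q (x.1, x.2, 0))) (𝓝 0) (𝓝 0) :=
  tendsto_of_analyticAt H.analytic_w H.w_zero

theorem tendsto_y (H : ScalarHSPM Q Q' f g ft gt) :
    Tendsto (fun x : ℂ × ℂ => (f (x.1, Q (x.1, x.2, 0)), ft (x.2, 0))) (𝓝 0) (𝓝 0) :=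
  tendsto_of_analyticAt H.analytic_y H.y_zero

theorem gt_fst (H : ScalarHSPM Q Q' f g ft gt) : ∀ᶠ χ in 𝓝 (0 : ℂ), gt (χ, 0) = 0 := by
  have ht : Tendsto (fun χ : ℂ => ((0, ft (χ, 0), gt (χ, 0)) : ℂ × ℂ × ℂ)) (𝓝 0) (𝓝 0) :=
    tendsto_of_analyticAt (analyticAt_const.prod ((analyticAt_pair_zero H.analytic_ft).prod
      (analyticAt_pair_zero H.analytic_gt))) (Prod.ext rfl (Prod.ext H.ft_zero H.gt_zero))
  filter_upwards [tendsto_mid_emb.eventually H.normal_Q, tendsto_mid_emb.eventually H.eq,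
    ht.eventually H.normal_Q'] with χ h1 h2 h3
  have e1 : f (0, 0) = 0 := H.f_zero
  have e2 : g (0, 0) = 0 := H.g_zero
  have e3 : Q (0, χ, 0) = 0 := h1.1
  have e4 := h3.1
  simp only [e3, e1, e2] at h2 e4
  rw [← e4, ← h2]

theorem eq_zero_level (H : ScalarHSPM Q Q' f g ft gt) : ∀ᶠ x in 𝓝 (0 : ℂ × ℂ),
    g (x.1, Q (x.1, x.2, 0)) = Q' (f (x.1, Q (x.1, x.2, 0)), ft (x.2, 0), 0) := by
  filter_upwards [tendsto_emb.eventually H.eq,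
    (continuous_snd.tendsto' (0 : ℂ × ℂ) 0 rfl).eventually H.gt_fst] with x h1 h2
  simpa [h2] using h1

theorem not_eventually_g_comp (H : ScalarHSPM Q Q' f g ft gt)
    (hM' : ¬ ∀ᶠ x in 𝓝 (0 : ℂ × ℂ), Q' (x.1, x.2, 0) = 0)
    (hf : ¬ ∀ᶠ z in 𝓝 (0 : ℂ), f (z, 0) = 0) (hft : ¬ ∀ᶠ z in 𝓝 (0 : ℂ), ft (z, 0) = 0) :
    ¬ ∀ᶠ x in 𝓝 (0 : ℂ × ℂ), g (x.1, Q (x.1, x.2, 0)) = 0 := by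
  intro h
  obtain ⟨r, K, hK, hqK, hK0⟩ := exists_eq_snd_pow_mul H.analytic_q' hM'
  have hprod : ∀ᶠ x in 𝓝 (0 : ℂ × ℂ),
      ft (x.2, 0) ^ r * K (f (x.1, Q (x.1, x.2, 0)), ft (x.2, 0)) = 0 := by
    filter_upwards [h, H.eq_zero_level, H.tendsto_y.eventually hqK] with x h1 h2 h3
    rw [← h3, ← h2, h1]
  have hKy : AnalyticAt ℂ (fun x : ℂ × ℂ => K (f (x.1, Q (x.1, x.2, 0)), ft (x.2, 0))) 0 :=
    AnalyticAt.fun_comp_of_eq (g := K) hK H.analytic_y H.y_zero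
  have hft' : AnalyticAt ℂ (fun x : ℂ × ℂ => ft (x.2, 0) ^ r) 0 :=
    (analyticAt_comp_snd (analyticAt_pair_zero H.analytic_ft)).pow r
  rcases mul_eventually_eq_zero hft' hKy hprod with h1 | h1
  · have ht : Tendsto (fun t : ℂ => ((0, t) : ℂ × ℂ)) (𝓝 0) (𝓝 0) :=
      (by fun_prop : Continuous fun t : ℂ => ((0, t) : ℂ × ℂ)).tendsto' _ _ rfl
    exact hft ((ht.eventually h1).mono fun t h => eq_zero_of_pow_eq_zero h)
  · refine not_eventually_comp_eq_zero (φ := fun z => K (z, 0))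
      (analyticAt_pair_zero H.analytic_f) H.f_zero hf hK0 ?_
    have e1 : ft (0, 0) = 0 := H.ft_zero
    filter_upwards [tendsto_pair_zero.eventually h1, H.q_fst] with z h2 h3
    simpa [h3, e1] using h2

theorem deriv_eq (H : ScalarHSPM Q Q' f g ft gt) : ∀ᶠ x in 𝓝 (0 : ℂ × ℂ),
    fderiv ℂ Q (x.1, x.2, 0) (0, 0, 1) * fderiv ℂ g (x.1, Q (x.1, x.2, 0)) (0, 1) =
      fderiv ℂ Q (x.1, x.2, 0) (0, 0, 1) * fderiv ℂ f (x.1, Q (x.1, x.2, 0)) (0, 1) *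
          fderiv ℂ Q' (f (x.1, Q (x.1, x.2, 0)), ft (x.2, 0), 0) (1, 0, 0) +
        fderiv ℂ ft (x.2, 0) (0, 1) *
          fderiv ℂ Q' (f (x.1, Q (x.1, x.2, 0)), ft (x.2, 0), 0) (0, 1, 0) +
        fderiv ℂ gt (x.2, 0) (0, 1) *
          fderiv ℂ Q' (f (x.1, Q (x.1, x.2, 0)), ft (x.2, 0), 0) (0, 0, 1) := by
  have hs : Tendsto (fun x : ℂ × ℂ => ((x.2, 0) : ℂ × ℂ)) (𝓝 0) (𝓝 0) :=
    (by fun_prop : Continuous fun x : ℂ × ℂ => ((x.2, 0) : ℂ × ℂ)).tendsto' _ _ rfl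
  filter_upwards [tendsto_emb.eventually H.eq.eventually_nhds,
    tendsto_emb.eventually H.analytic_Q.eventually_analyticAt,
    H.tendsto_w.eventually H.analytic_g.eventually_analyticAt,
    H.tendsto_w.eventually H.analytic_f.eventually_analyticAt,
    hs.eventually H.analytic_ft.eventually_analyticAt,
    hs.eventually H.analytic_gt.eventually_analyticAt,
    H.tendsto_y.eventually (tendsto_emb.eventually H.analytic_Q'.eventually_analyticAt),
    (continuous_snd.tendsto' (0 : ℂ × ℂ) 0 rfl).eventually H.gt_fst]
    with x he hQ hg hf hft hgt hQ' hgt0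
  have hc : HasDerivAt (fun τ : ℂ => ((x.1, x.2, τ) : ℂ × ℂ × ℂ)) (0, 0, 1) 0 :=
    (hasDerivAt_const _ _).prodMk ((hasDerivAt_const _ _).prodMk (hasDerivAt_id _))
  have hc2 : HasDerivAt (fun τ : ℂ => ((x.2, τ) : ℂ × ℂ)) (0, 1) 0 :=
    (hasDerivAt_const _ _).prodMk (hasDerivAt_id _)
  have dQ := hQ.differentiableAt.hasFDerivAt.comp_hasDerivAt_of_eq (0 : ℂ) hc rfl
  have dW : HasDerivAt (fun τ : ℂ => ((x.1, Q (x.1, x.2, τ)) : ℂ × ℂ))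
      (0, fderiv ℂ Q (x.1, x.2, 0) (0, 0, 1)) 0 := (hasDerivAt_const _ _).prodMk dQ
  have dg := hg.differentiableAt.hasFDerivAt.comp_hasDerivAt_of_eq (0 : ℂ) dW rfl
  have df := hf.differentiableAt.hasFDerivAt.comp_hasDerivAt_of_eq (0 : ℂ) dW rfl
  have dft := hft.differentiableAt.hasFDerivAt.comp_hasDerivAt_of_eq (0 : ℂ) hc2 rfl
  have dgt := hgt.differentiableAt.hasFDerivAt.comp_hasDerivAt_of_eq (0 : ℂ) hc2 rfl
  have dQ' := hQ'.differentiableAt.hasFDerivAt.comp_hasDerivAt_of_eq (0 : ℂ)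
    (df.prodMk (dft.prodMk dgt)) (by simp [hgt0])
  have hev : (g ∘ fun τ : ℂ => ((x.1, Q (x.1, x.2, τ)) : ℂ × ℂ)) =ᶠ[𝓝 0]
      Q' ∘ fun τ : ℂ => (f (x.1, Q (x.1, x.2, τ)), ft (x.2, τ), gt (x.2, τ)) :=
    hc.continuousAt.tendsto.eventually he
  have key := dg.unique (dQ'.congr_of_eventuallyEq hev)
  have l1 : ∀ (L : ℂ × ℂ →L[ℂ] ℂ) (a : ℂ), L (0, a) = a * L (0, 1) := fun L a => by
    rw [← smul_eq_mul, ← map_smul]; simp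
  have l2 : ∀ (L : ℂ × ℂ × ℂ →L[ℂ] ℂ) (a b c : ℂ),
      L (a, b, c) = a * L (1, 0, 0) + b * L (0, 1, 0) + c * L (0, 0, 1) := fun L a b c => by
    simp only [← smul_eq_mul, ← map_smul, ← map_add]; simp
  rw [l1, l1 (fderiv ℂ f _), l2 (fderiv ℂ Q' _)] at key
  exact key

theorem finiteType_of_nondeg (H : ScalarHSPM Q Q' f g ft gt)
    (hM' : ¬ ∀ᶠ x in 𝓝 (0 : ℂ × ℂ), Q' (x.1, x.2, 0) = 0)
    (hf : ¬ ∀ᶠ z in 𝓝 (0 : ℂ), f (z, 0) = 0) (hft : ¬ ∀ᶠ z in 𝓝 (0 : ℂ), ft (z, 0) = 0) :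
    ¬ ∀ᶠ x in 𝓝 (0 : ℂ × ℂ), Q (x.1, x.2, 0) = 0 := by
  intro h
  refine H.not_eventually_g_comp hM' hf hft ?_
  filter_upwards [h, (continuous_fst.tendsto' (0 : ℂ × ℂ) 0 rfl).eventually H.g_fst] with x h1 h2
  rw [h1, h2]

theorem g_ne_zero_of_nondeg (H : ScalarHSPM Q Q' f g ft gt)
    (hM' : ¬ ∀ᶠ x in 𝓝 (0 : ℂ × ℂ), Q' (x.1, x.2, 0) = 0)
    (hf : ¬ ∀ᶠ z in 𝓝 (0 : ℂ), f (z, 0) = 0) (hft : ¬ ∀ᶠ z in 𝓝 (0 : ℂ), ft (z, 0) = 0) :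
    ¬ ∀ᶠ x in 𝓝 (0 : ℂ × ℂ), g x = 0 := fun h =>
  H.not_eventually_g_comp hM' hf hft (H.tendsto_w.eventually h)

theorem transversal_of_nondeg (H : ScalarHSPM Q Q' f g ft gt)
    (hM' : ¬ ∀ᶠ x in 𝓝 (0 : ℂ × ℂ), Q' (x.1, x.2, 0) = 0)
    (hf : ¬ ∀ᶠ z in 𝓝 (0 : ℂ), f (z, 0) = 0) (hft : ¬ ∀ᶠ z in 𝓝 (0 : ℂ), ft (z, 0) = 0) :
    deriv (fun w => g (0, w)) 0 ≠ 0 := by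
  obtain ⟨r, K, hK, hqK, hK0⟩ := exists_eq_snd_pow_mul H.analytic_q' hM'
  obtain ⟨s, h, hh, hqh, hh0⟩ := exists_eq_snd_pow_mul H.analytic_q
    (H.finiteType_of_nondeg hM' hf hft)
  obtain ⟨m, G, hG, hgG, hG0⟩ := exists_eq_snd_pow_mul H.analytic_g
    (H.g_ne_zero_of_nondeg hM' hf hft)
  have hr : r ≠ 0 := by
    rintro rfl
    refine hK0 ?_
    filter_upwards [tendsto_pair_zero.eventually hqK, H.q'_fst] with z h1 h2
    simpa [h2] using h1.symm
  have hm : m ≠ 0 := by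
    rintro rfl
    refine hG0 ?_
    filter_upwards [tendsto_pair_zero.eventually hgG, H.g_fst] with z h1 h2
    simpa [h2] using h1.symm
  have tendsto_inr : Tendsto (fun t : ℂ => ((0, t) : ℂ × ℂ)) (𝓝 0) (𝓝 0) :=
    (by fun_prop : Continuous fun t : ℂ => ((0, t) : ℂ × ℂ)).tendsto' _ _ rfl
  have hh00 : h (0, 0) = 0 := by
    have hin : AnalyticAt ℂ (fun t : ℂ => h (0, t)) 0 :=
      AnalyticAt.fun_comp_of_eq (g := h) hh (analyticAt_const.prod analyticAt_id) rfl
    have := (mul_eventually_eq_zero (u := fun t : ℂ => t ^ s) (by fun_prop) hin (by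
      filter_upwards [tendsto_inr.eventually hqh, tendsto_mid_emb.eventually H.normal_Q]
        with t h1 h2
      have h3 : Q (0, t, 0) = 0 := h2.1
      rw [← h1, h3])).resolve_left (not_eventually_pow_eq_zero s)
    exact this.self_of_nhds
  -- the analytic ingredients, as functions of `x = (z, χ)`
  have aq := H.analytic_q
  have aφ := analyticAt_comp_snd (analyticAt_pair_zero H.analytic_ft)
  have aG : AnalyticAt ℂ (fun x : ℂ × ℂ => G (x.1, Q (x.1, x.2, 0))) 0 :=
    AnalyticAt.fun_comp_of_eq (g := G) hG H.analytic_w H.w_zero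
  have aGw : AnalyticAt ℂ (fun x : ℂ × ℂ => fderiv ℂ G (x.1, Q (x.1, x.2, 0)) (0, 1)) 0 :=
    AnalyticAt.fun_comp_of_eq (g := fun y => fderiv ℂ G y (0, 1)) (analyticAt_fderiv_apply hG _)
      H.analytic_w H.w_zero
  have afw : AnalyticAt ℂ (fun x : ℂ × ℂ => fderiv ℂ f (x.1, Q (x.1, x.2, 0)) (0, 1)) 0 :=
    AnalyticAt.fun_comp_of_eq (g := fun y => fderiv ℂ f y (0, 1))
      (analyticAt_fderiv_apply H.analytic_f _) H.analytic_w H.w_zero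
  have aQτ : AnalyticAt ℂ (fun x : ℂ × ℂ => fderiv ℂ Q (x.1, x.2, 0) (0, 0, 1)) 0 :=
    AnalyticAt.fun_comp_of_eq (g := fun y => fderiv ℂ Q y (0, 0, 1))
      (analyticAt_fderiv_apply H.analytic_Q _) analyticAt_emb rfl
  have aK : AnalyticAt ℂ (fun x : ℂ × ℂ => K (f (x.1, Q (x.1, x.2, 0)), ft (x.2, 0))) 0 :=
    AnalyticAt.fun_comp_of_eq (g := K) hK H.analytic_y H.y_zero
  have aKz : AnalyticAt ℂ (fun x : ℂ × ℂ =>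
      fderiv ℂ K (f (x.1, Q (x.1, x.2, 0)), ft (x.2, 0)) (1, 0)) 0 :=
    AnalyticAt.fun_comp_of_eq (g := fun y => fderiv ℂ K y (1, 0)) (analyticAt_fderiv_apply hK _)
      H.analytic_y H.y_zero
  have aKχ : AnalyticAt ℂ (fun x : ℂ × ℂ =>
      fderiv ℂ K (f (x.1, Q (x.1, x.2, 0)), ft (x.2, 0)) (0, 1)) 0 :=
    AnalyticAt.fun_comp_of_eq (g := fun y => fderiv ℂ K y (0, 1)) (analyticAt_fderiv_apply hK _)
      H.analytic_y H.y_zero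
  have aQ'τ' : AnalyticAt ℂ (fun x : ℂ × ℂ => fderiv ℂ Q' (x.1, x.2, 0) (0, 0, 1)) 0 :=
    AnalyticAt.fun_comp_of_eq (g := fun y => fderiv ℂ Q' y (0, 0, 1))
      (analyticAt_fderiv_apply H.analytic_Q' _) analyticAt_emb rfl
  have aQ'τ : AnalyticAt ℂ (fun x : ℂ × ℂ =>
      fderiv ℂ Q' (f (x.1, Q (x.1, x.2, 0)), ft (x.2, 0), 0) (0, 0, 1)) 0 :=
    AnalyticAt.fun_comp_of_eq (g := fun x : ℂ × ℂ => fderiv ℂ Q' (x.1, x.2, 0) (0, 0, 1))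
      aQ'τ' H.analytic_y H.y_zero
  have aft0 := analyticAt_pair_zero H.analytic_ft
  have aftτ := analyticAt_pair_zero (analyticAt_fderiv_apply H.analytic_ft (0, 1))
  have agtτ := analyticAt_pair_zero (analyticAt_fderiv_apply H.analytic_gt (0, 1))
  have aα := (hh.fun_pow m).fun_mul ((((analyticAt_const (v := (m : ℂ))).fun_mul aG).fun_add
    (aq.fun_mul aGw) |>.fun_mul aQτ |>.fun_mul aK).fun_sub
      (aG.fun_mul aq |>.fun_mul aKz |>.fun_mul aQτ |>.fun_mul afw))
  have aβ := ((hh.fun_pow (m + 1)).fun_mul aG).fun_mul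
    (((analyticAt_const (v := (r : ℂ))).fun_mul aK).fun_add (aφ.fun_mul aKχ))
  have aγ := (hh.fun_mul aK).fun_mul aQ'τ
  obtain ⟨a₀, a₁, a₂, ha, hrel⟩ := exists_leading_relation aα aβ aγ
    (p₀ := fun t => t ^ (s * m) * ft (t, 0))
    (p₁ := fun t => t ^ (s + s * m) * fderiv ℂ ft (t, 0) (0, 1))
    (p₂ := fun t => t ^ s * ft (t, 0) * fderiv ℂ gt (t, 0) (0, 1))
    ((analyticAt_id.fun_pow _).fun_mul aft0) ((analyticAt_id.fun_pow _).fun_mul aftτ)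
    (((analyticAt_id.fun_pow _).fun_mul aft0).fun_mul agtτ)
    (fun hp => (mul_eventually_eq_zero (by fun_prop) aft0 hp).elim
      (not_eventually_pow_eq_zero _) hft) (by
    filter_upwards [H.deriv_eq, H.eq_zero_level, hqh, H.tendsto_w.eventually hgG.eventually_nhds,
      H.tendsto_y.eventually hqK.eventually_nhds,
      H.tendsto_w.eventually hG.eventually_analyticAt,
      H.tendsto_y.eventually hK.eventually_analyticAt,
      H.tendsto_y.eventually (tendsto_emb.eventually H.analytic_Q'.eventually_analyticAt)]
      with x E2 E1 hq hg' hq' hGa hKa hQa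
    obtain ⟨-, E3⟩ := fderiv_snd_pow_mul hGa.differentiableAt hg'
    obtain ⟨E4, E5⟩ := fderiv_snd_pow_mul hKa.differentiableAt hq'
    have hd : ∀ v : ℂ × ℂ, fderiv ℂ (fun x : ℂ × ℂ => Q' (x.1, x.2, 0))
        (f (x.1, Q (x.1, x.2, 0)), ft (x.2, 0)) v =
        fderiv ℂ Q' (f (x.1, Q (x.1, x.2, 0)), ft (x.2, 0), 0) (v.1, v.2, 0) := by
      intro v
      have hi : HasFDerivAt (fun x : ℂ × ℂ => ((x.1, x.2, 0) : ℂ × ℂ × ℂ))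
          ((ContinuousLinearMap.fst ℂ ℂ ℂ).prod ((ContinuousLinearMap.snd ℂ ℂ ℂ).prod 0))
          (f (x.1, Q (x.1, x.2, 0)), ft (x.2, 0)) :=
        hasFDerivAt_fst.prodMk (hasFDerivAt_snd.prodMk (hasFDerivAt_const _ _))
      have hcomp : HasFDerivAt (fun x : ℂ × ℂ => Q' (x.1, x.2, 0)) _
          (f (x.1, Q (x.1, x.2, 0)), ft (x.2, 0)) :=
        HasFDerivAt.comp (g := Q') (f := fun x : ℂ × ℂ => ((x.1, x.2, 0) : ℂ × ℂ × ℂ))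
          (f (x.1, Q (x.1, x.2, 0)), ft (x.2, 0)) hQa.differentiableAt.hasFDerivAt hi
      rw [hcomp.fderiv]
      rfl
    rw [hd] at E4 E5
    have E6 := hg'.self_of_nhds
    have E7 := hq'.self_of_nhds
    dsimp only at E2 E1 hq E3 E4 E5 E6 E7 ⊢
    rw [E6, E7] at E1
    have hw : x.2 ^ (s * m) * h x ^ m = Q (x.1, x.2, 0) ^ m := by
      rw [hq, mul_pow, pow_mul]
    generalize Q (x.1, x.2, 0) = w at *
    generalize fderiv ℂ Q (x.1, x.2, 0) (0, 0, 1) = Qτ at *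
    generalize fderiv ℂ g (x.1, w) (0, 1) = gw at *
    generalize fderiv ℂ f (x.1, w) (0, 1) = fw at *
    generalize fderiv ℂ G (x.1, w) (0, 1) = Gw at *
    generalize fderiv ℂ Q' (f (x.1, w), ft (x.2, 0), 0) (1, 0, 0) = A at *
    generalize fderiv ℂ Q' (f (x.1, w), ft (x.2, 0), 0) (0, 1, 0) = B at *
    generalize fderiv ℂ Q' (f (x.1, w), ft (x.2, 0), 0) (0, 0, 1) = C at *
    generalize fderiv ℂ K (f (x.1, w), ft (x.2, 0)) (1, 0) = Kz at *
    generalize fderiv ℂ K (f (x.1, w), ft (x.2, 0)) (0, 1) = Kχ at *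
    generalize K (f (x.1, w), ft (x.2, 0)) = k at *
    generalize G (x.1, w) = γ at *
    generalize fderiv ℂ ft (x.2, 0) (0, 1) = fτ at *
    generalize fderiv ℂ gt (x.2, 0) (0, 1) = gτ at *
    generalize ft (x.2, 0) = φ at *
    have key : w ^ m * φ * ((m * γ + w * Gw) * Qτ * k - γ * w * Kz * Qτ * fw) =
        w ^ m * γ * w * (r * k + φ * Kχ) * fτ + C * gτ * w * φ * k := by
      linear_combination (w * φ * k) * E2 - Qτ * φ * k * E3 + Qτ * fw * w * φ * k * E4 +
        w * k * fτ * E5 + (-Qτ * fw * w * φ * Kz - w * fτ * (r * k + φ * Kχ)) * E1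
    have e1 : x.2 ^ (s + s * m) * h x ^ (m + 1) = w ^ m * w := by
      rw [← hw, hq]; ring
    linear_combination key + φ * ((m * γ + w * Gw) * Qτ * k - γ * w * Kz * Qτ * fw) * hw -
      γ * (r * k + φ * Kχ) * fτ * e1 + C * gτ * φ * k * hq)
  have hfin := eq_one_of_leading_relation (analyticAt_pair_zero hh) (analyticAt_pair_zero hG)
    (K := fun z => K (f (z, 0), 0))
    (AnalyticAt.fun_comp_of_eq (g := fun z => K (z, 0)) (analyticAt_pair_zero hK)
      (analyticAt_pair_zero H.analytic_f) H.f_zero) hh00 hh0 hG0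
    (not_eventually_comp_eq_zero (φ := fun z => K (z, 0))
      (analyticAt_pair_zero H.analytic_f) H.f_zero hf hK0) hm hr ha (by
    have tτ : ∀ {P : ℂ × ℂ × ℂ → ℂ}, AnalyticAt ℂ P 0 →
        (∀ᶠ p in 𝓝 (0 : ℂ × ℂ × ℂ), P (0, p.2) = p.2.2 ∧ P (p.1, 0, p.2.2) = p.2.2) →
        ∀ᶠ z in 𝓝 (0 : ℂ), fderiv ℂ P (z, 0, 0) (0, 0, 1) = 1 := by
      intro P hP hn
      filter_upwards [tendsto_fst_emb.eventually hn.eventually_nhds,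
        tendsto_fst_emb.eventually hP.eventually_analyticAt] with z h1 h2
      have hc : HasDerivAt (fun τ : ℂ => ((z, 0, τ) : ℂ × ℂ × ℂ)) (0, 0, 1) 0 :=
        (hasDerivAt_const _ _).prodMk ((hasDerivAt_const _ _).prodMk (hasDerivAt_id _))
      have d1 := h2.differentiableAt.hasFDerivAt.comp_hasDerivAt_of_eq (0 : ℂ) hc rfl
      have d2 : (P ∘ fun τ : ℂ => ((z, 0, τ) : ℂ × ℂ × ℂ)) =ᶠ[𝓝 0] id :=
        (hc.continuousAt.tendsto.eventually h1).mono fun τ h => h.2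
      exact d1.unique ((hasDerivAt_id (0 : ℂ)).congr_of_eventuallyEq d2)
    filter_upwards [hrel, H.q_fst, tτ H.analytic_Q H.normal_Q,
      (tendsto_of_analyticAt (analyticAt_pair_zero H.analytic_f) H.f_zero).eventually
        (tτ H.analytic_Q' H.normal_Q')] with z h1 h2 h3 h4
    have e1 : ft (0, 0) = 0 := H.ft_zero
    simp only [h2, e1, h3, h4] at h1
    linear_combination h1)
  obtain ⟨rfl, hG00⟩ := hfin
  have hG' : DifferentiableAt ℂ (fun w : ℂ => G (0, w)) 0 :=
    (AnalyticAt.fun_comp_of_eq (g := G) (f := fun w : ℂ => ((0, w) : ℂ × ℂ)) hG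
      (analyticAt_const.prod analyticAt_id) rfl).differentiableAt
  have hd : HasDerivAt (fun w : ℂ => w * G (0, w)) (1 * G (0, 0) + 0 * _) 0 :=
    (hasDerivAt_id (0 : ℂ)).mul hG'.hasDerivAt
  have hev : (fun w => g (0, w)) =ᶠ[𝓝 0] fun w : ℂ => w * G (0, w) := by
    filter_upwards [tendsto_inr.eventually hgG] with w hw
    simpa using hw
  rw [hev.deriv_eq, hd.deriv]
  simpa using hG00

theorem null_of_ft_eq_zero (H : ScalarHSPM Q Q' f g ft gt)
    (hM : ¬ ∀ᶠ x in 𝓝 (0 : ℂ × ℂ), Q (x.1, x.2, 0) = 0)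
    (hft : ∀ᶠ z in 𝓝 (0 : ℂ), ft (z, 0) = 0) :
    (∀ᶠ x in 𝓝 (0 : ℂ × ℂ), g x = 0) ∧ ∀ᶠ x in 𝓝 (0 : ℂ × ℂ), gt x = 0 := by
  have hg : ∀ᶠ x in 𝓝 (0 : ℂ × ℂ), g x = 0 := by
    refine eventually_eq_zero_of_comp H.analytic_g H.analytic_q H.q_fst hM ?_
    filter_upwards [H.eq_zero_level, (continuous_snd.tendsto' (0 : ℂ × ℂ) 0 rfl).eventually hft,
      ((continuous_fst.tendsto' (0 : ℂ × ℂ) 0 rfl).comp H.tendsto_y).eventually H.q'_fst]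
      with x h1 h2 h3
    rw [h1, h2]
    exact h3
  refine ⟨hg, ?_⟩
  have a1 : AnalyticAt ℂ (fun p : ℂ × ℂ × ℂ => (p.1, Q p)) 0 := analyticAt_fst.prod H.analytic_Q
  have z1 : (fun p : ℂ × ℂ × ℂ => (p.1, Q p)) 0 = 0 := Prod.ext rfl H.Q_zero
  have t1 := tendsto_of_analyticAt a1 z1
  have a2 : AnalyticAt ℂ (fun p : ℂ × ℂ × ℂ => f (p.1, Q p)) 0 :=
    AnalyticAt.fun_comp_of_eq (g := f) H.analytic_f a1 z1
  have z2 : (fun p : ℂ × ℂ × ℂ => f (p.1, Q p)) 0 = 0 := by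
    have : ((0 : ℂ × ℂ × ℂ).1, Q 0) = 0 := z1
    simp only [this, H.f_zero]
  have a3 : AnalyticAt ℂ (fun e : ℂ × ℂ => (ft e, gt e)) 0 :=
    H.analytic_ft.prod H.analytic_gt
  have z3 : (fun e : ℂ × ℂ => (ft e, gt e)) 0 = 0 := Prod.ext H.ft_zero H.gt_zero
  have hgt : ∀ᶠ e in 𝓝 (0 : ℂ × ℂ), Q' (0, ft e, gt e) = gt e := by
    have t : Tendsto (fun e : ℂ × ℂ => ((0, ft e, gt e) : ℂ × ℂ × ℂ)) (𝓝 0) (𝓝 0) :=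
      tendsto_of_analyticAt (analyticAt_const.prod a3) (Prod.ext rfl z3)
    exact (t.eventually H.normal_Q').mono fun e he => he.1
  have hQf : ∀ᶠ e in 𝓝 (0 : ℂ × ℂ), Q' (0, ft e, gt e) = 0 → gt e = 0 :=
    hgt.mono fun e h1 h2 => h1.symm.trans h2
  rcases eventually_eq_or_eventually_eq (u := fun p : ℂ × ℂ × ℂ => f (p.1, Q p)) (P := Q')
    (b := fun e : ℂ × ℂ => (ft e, gt e)) (c := fun _ => 0) a2 z2 H.analytic_Q' a3 z3
    analyticAt_const (by
      filter_upwards [H.eq, t1.eventually hg] with p h1 h2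
      rw [← h1, h2]) with h | h
  · filter_upwards [h, hQf] with e h1 h2 using h2 h1
  · have tsnd : Tendsto (fun x : ℂ × ℂ => ((x.1, 0, x.2) : ℂ × ℂ × ℂ)) (𝓝 0) (𝓝 0) :=
      (by fun_prop : Continuous fun x : ℂ × ℂ => ((x.1, 0, x.2) : ℂ × ℂ × ℂ)).tendsto' _ _ rfl
    have tinr : Tendsto (fun p : ℂ × ℂ × ℂ => ((0, p.2) : ℂ × ℂ × ℂ)) (𝓝 0) (𝓝 0) :=
      (by fun_prop : Continuous fun p : ℂ × ℂ × ℂ => ((0, p.2) : ℂ × ℂ × ℂ)).tendsto' _ _ rfl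
    have hfst : ∀ᶠ x in 𝓝 (0 : ℂ × ℂ), f x = f (0, x.2) := by
      filter_upwards [tsnd.eventually h, tsnd.eventually H.normal_Q,
        tsnd.eventually (tinr.eventually H.normal_Q)] with x h1 h2 h3
      rwa [h2.2, h3.1] at h1
    have hφ : ∀ᶠ x in 𝓝 (0 : ℂ × ℂ), f (0, x.2) = 0 := by
      have a4 : AnalyticAt ℂ (fun x : ℂ × ℂ => f (0, x.2)) 0 :=
        AnalyticAt.fun_comp_of_eq (g := f) (f := fun x : ℂ × ℂ => ((0, x.2) : ℂ × ℂ))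
          H.analytic_f (analyticAt_const.prod analyticAt_snd) rfl
      refine eventually_eq_zero_of_comp a4 H.analytic_q H.q_fst hM ?_
      filter_upwards [tendsto_emb.eventually h, H.tendsto_w.eventually hfst,
        tendsto_emb.eventually (tinr.eventually H.normal_Q)] with x h1 h2 h3
      have e : f (0, 0) = 0 := H.f_zero
      rw [← h2, h1, h3.1, e]
    have tmid : Tendsto (fun e : ℂ × ℂ => ((0, e) : ℂ × ℂ × ℂ)) (𝓝 0) (𝓝 0) :=
      (by fun_prop : Continuous fun e : ℂ × ℂ => ((0, e) : ℂ × ℂ × ℂ)).tendsto' _ _ rfl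
    filter_upwards [hQf, tmid.eventually H.eq, tmid.eventually (t1.eventually hg),
      tmid.eventually (t1.eventually hφ)] with e h1 h2 h3 h4
    refine h1 ?_
    rw [h3, h4] at h2
    exact h2.symm

theorem null_of_f_eq_zero (H : ScalarHSPM Q Q' f g ft gt)
    (hM : ¬ ∀ᶠ x in 𝓝 (0 : ℂ × ℂ), Q (x.1, x.2, 0) = 0)
    (hf : ∀ᶠ z in 𝓝 (0 : ℂ), f (z, 0) = 0) :
    (∀ᶠ x in 𝓝 (0 : ℂ × ℂ), g x = 0) ∧ ∀ᶠ x in 𝓝 (0 : ℂ × ℂ), gt x = 0 := by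
  obtain ⟨R, hR, hQR, hRn⟩ := exists_solution H.analytic_Q H.normal_Q
  have R0 : R 0 = 0 := hRn.self_of_nhds.1
  -- `R` with its first two arguments interchanged
  have ts : Tendsto (fun p : ℂ × ℂ × ℂ => ((p.2.1, p.1, p.2.2) : ℂ × ℂ × ℂ)) (𝓝 0) (𝓝 0) :=
    (by fun_prop : Continuous fun p : ℂ × ℂ × ℂ =>
      ((p.2.1, p.1, p.2.2) : ℂ × ℂ × ℂ)).tendsto' _ _ rfl
  have a21 : AnalyticAt ℂ (fun p : ℂ × ℂ × ℂ => p.2.1) 0 :=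
    AnalyticAt.fun_comp_of_eq (g := Prod.fst) analyticAt_fst analyticAt_snd rfl
  have a22 : AnalyticAt ℂ (fun p : ℂ × ℂ × ℂ => p.2.2) 0 :=
    AnalyticAt.fun_comp_of_eq (g := Prod.snd) analyticAt_snd analyticAt_snd rfl
  have as : AnalyticAt ℂ (fun p : ℂ × ℂ × ℂ => ((p.2.1, p.1, p.2.2) : ℂ × ℂ × ℂ)) 0 :=
    a21.prod (analyticAt_fst.prod a22)
  have aS : AnalyticAt ℂ (fun p : ℂ × ℂ × ℂ => R (p.2.1, p.1, p.2.2)) 0 :=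
    AnalyticAt.fun_comp_of_eq (g := R) hR as rfl
  have aρ : AnalyticAt ℂ (fun x : ℂ × ℂ => R (x.2, x.1, 0)) 0 :=
    AnalyticAt.fun_comp_of_eq (g := R) hR
      (analyticAt_snd.prod (analyticAt_fst.prod analyticAt_const)) rfl
  have tsw : Tendsto (fun x : ℂ × ℂ => ((x.2, x.1, 0) : ℂ × ℂ × ℂ)) (𝓝 0) (𝓝 0) :=
    (by fun_prop : Continuous fun x : ℂ × ℂ => ((x.2, x.1, 0) : ℂ × ℂ × ℂ)).tendsto' _ _ rfl
  have hρ0 : ∀ᶠ z in 𝓝 (0 : ℂ), R (0, z, 0) = 0 :=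
    (tendsto_mid_emb.eventually hRn).mono fun z hz => hz.1
  have hρ : ¬ ∀ᶠ x in 𝓝 (0 : ℂ × ℂ), R (x.2, x.1, 0) = 0 := by
    intro h
    refine hM ?_
    have hs : Tendsto (fun x : ℂ × ℂ => ((x.2, x.1) : ℂ × ℂ)) (𝓝 0) (𝓝 0) :=
      (by fun_prop : Continuous fun x : ℂ × ℂ => ((x.2, x.1) : ℂ × ℂ)).tendsto' _ _ rfl
    filter_upwards [hs.eventually h, tendsto_emb.eventually hQR] with x h1 h2
    rwa [h1] at h2
  have tS : Tendsto (fun p : ℂ × ℂ × ℂ => ((p.1, R p) : ℂ × ℂ)) (𝓝 0) (𝓝 0) :=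
    tendsto_of_analyticAt (analyticAt_fst.prod hR) (Prod.ext rfl R0)
  have tR : Tendsto (fun p : ℂ × ℂ × ℂ => ((p.1, p.2.1, R p) : ℂ × ℂ × ℂ)) (𝓝 0) (𝓝 0) :=
    tendsto_of_analyticAt (analyticAt_fst.prod (a21.prod hR)) (Prod.ext rfl (Prod.ext rfl R0))
  have hgt : ∀ᶠ x in 𝓝 (0 : ℂ × ℂ), gt x = 0 := by
    refine eventually_eq_zero_of_comp H.analytic_gt aρ hρ0 hρ ?_
    have t : Tendsto (fun e : ℂ × ℂ => ((0, ft e, gt e) : ℂ × ℂ × ℂ)) (𝓝 0) (𝓝 0) :=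
      tendsto_of_analyticAt (analyticAt_const.prod (H.analytic_ft.prod H.analytic_gt))
        (Prod.ext rfl (Prod.ext H.ft_zero H.gt_zero))
    have tχ : Tendsto (fun x : ℂ × ℂ => ((x.1, R (x.2, x.1, 0)) : ℂ × ℂ)) (𝓝 0) (𝓝 0) :=
      tendsto_of_analyticAt (analyticAt_fst.prod aρ) (Prod.ext rfl R0)
    filter_upwards [tsw.eventually hQR, tsw.eventually (tR.eventually H.eq),
      (continuous_snd.tendsto' (0 : ℂ × ℂ) 0 rfl).eventually hf,
      (continuous_snd.tendsto' (0 : ℂ × ℂ) 0 rfl).eventually H.g_fst,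
      tχ.eventually (t.eventually H.normal_Q')] with x h1 h2 h3 h4 h5
    rw [h1, h3, h4, h5.1] at h2
    exact h2.symm
  refine ⟨?_, hgt⟩
  -- the mapping equation on the Segre varieties, in terms of `(χ, z, w)`
  have heq : ∀ᶠ p in 𝓝 (0 : ℂ × ℂ × ℂ),
      Q' (f p.2, ft (p.1, R (p.2.1, p.1, p.2.2)), 0) = g p.2 := by
    have tχ : Tendsto (fun p : ℂ × ℂ × ℂ => ((p.2.1, R p) : ℂ × ℂ)) (𝓝 0) (𝓝 0) :=
      tendsto_of_analyticAt (a21.prod hR) (Prod.ext rfl R0)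
    filter_upwards [ts.eventually hQR, ts.eventually (tR.eventually H.eq),
      ts.eventually (tχ.eventually hgt)] with p h1 h2 h3
    rw [h1, h3] at h2
    exact h2.symm
  have au : AnalyticAt ℂ (fun p : ℂ × ℂ × ℂ => ft (p.1, R (p.2.1, p.1, p.2.2))) 0 :=
    AnalyticAt.fun_comp_of_eq (g := ft) H.analytic_ft (analyticAt_fst.prod aS)
      (Prod.ext rfl R0)
  have u0 : (fun p : ℂ × ℂ × ℂ => ft (p.1, R (p.2.1, p.1, p.2.2))) 0 = 0 := by
    have e : (((0 : ℂ), R 0) : ℂ × ℂ) = 0 := Prod.ext rfl R0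
    exact (congrArg ft e).trans H.ft_zero
  have aP : AnalyticAt ℂ (fun x : ℂ × ℂ => Q' (x.2, x.1, 0)) 0 :=
    AnalyticAt.fun_comp_of_eq (g := Q') H.analytic_Q'
      (analyticAt_snd.prod (analyticAt_fst.prod analyticAt_const)) rfl
  have hQ'f : ∀ᶠ x in 𝓝 (0 : ℂ × ℂ), Q' (f x, 0, 0) = 0 :=
    (tendsto_of_analyticAt H.analytic_f H.f_zero).eventually H.q'_fst
  rcases eventually_eq_or_eventually_eq (P := fun x : ℂ × ℂ => Q' (x.2, x.1, 0)) (b := f)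
    (c := g) au u0 aP H.analytic_f H.f_zero H.analytic_g heq with h | h
  · filter_upwards [h, hQ'f] with x h1 h2
    exact h1.symm.trans h2
  · have t1 : Tendsto (fun x : ℂ × ℂ => ((x.1, 0, x.2) : ℂ × ℂ × ℂ)) (𝓝 0) (𝓝 0) :=
      (by fun_prop : Continuous fun x : ℂ × ℂ => ((x.1, 0, x.2) : ℂ × ℂ × ℂ)).tendsto' _ _ rfl
    have hsep : ∀ᶠ p in 𝓝 (0 : ℂ × ℂ × ℂ), ft (p.1, R (p.2.1, p.1, p.2.2)) = ft (0, p.2.2) := by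
      filter_upwards [h, ts.eventually hRn] with p h1 h2
      rw [h1, h2.2]
    have hfst : ∀ᶠ x in 𝓝 (0 : ℂ × ℂ), ft x = ft (0, x.2) := by
      filter_upwards [t1.eventually hsep, t1.eventually (ts.eventually hRn)] with x h1 h2
      rwa [h2.1] at h1
    have hφ : ∀ᶠ x in 𝓝 (0 : ℂ × ℂ), ft (0, x.2) = 0 := by
      have a4 : AnalyticAt ℂ (fun x : ℂ × ℂ => ft (0, x.2)) 0 :=
        AnalyticAt.fun_comp_of_eq (g := ft) (f := fun x : ℂ × ℂ => ((0, x.2) : ℂ × ℂ))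
          H.analytic_ft (analyticAt_const.prod analyticAt_snd) rfl
      refine eventually_eq_zero_of_comp a4 aρ hρ0 hρ ?_
      have tχ : Tendsto (fun x : ℂ × ℂ => ((x.1, R (x.2, x.1, 0)) : ℂ × ℂ)) (𝓝 0) (𝓝 0) :=
        tendsto_of_analyticAt (analyticAt_fst.prod aρ) (Prod.ext rfl R0)
      filter_upwards [tendsto_emb.eventually hsep, tχ.eventually hfst] with x h1 h2
      exact h2.symm.trans (h1.trans H.ft_zero)
    have t0 : Tendsto (fun x : ℂ × ℂ => ((0, x) : ℂ × ℂ × ℂ)) (𝓝 0) (𝓝 0) :=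
      (by fun_prop : Continuous fun x : ℂ × ℂ => ((0, x) : ℂ × ℂ × ℂ)).tendsto' _ _ rfl
    filter_upwards [t0.eventually heq, hQ'f, t0.eventually hsep, hφ] with x h1 h2 h3 h4
    rw [← h1, h3, h4, h2]

end ScalarHSPM

theorem ScalarHSPM.iff_of_finiteType {Q Q' : ℂ × ℂ × ℂ → ℂ} {f g ft gt : ℂ × ℂ → ℂ}
    (H : ScalarHSPM Q Q' f g ft gt) (hM' : ¬ ∀ᶠ x in 𝓝 (0 : ℂ × ℂ), Q' (x.1, x.2, 0) = 0) :
    (((¬ ∀ᶠ z in 𝓝 (0 : ℂ), f (z, 0) = 0) ∧ ¬ ∀ᶠ z in 𝓝 (0 : ℂ), ft (z, 0) = 0) ↔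
      (¬ ∀ᶠ x in 𝓝 (0 : ℂ × ℂ), Q (x.1, x.2, 0) = 0) ∧
        ¬ ((∀ᶠ x in 𝓝 (0 : ℂ × ℂ), g x = 0) ∧ ∀ᶠ x in 𝓝 (0 : ℂ × ℂ), gt x = 0)) ∧
    (((¬ ∀ᶠ z in 𝓝 (0 : ℂ), f (z, 0) = 0) ∧ ¬ ∀ᶠ z in 𝓝 (0 : ℂ), ft (z, 0) = 0) ↔
      (¬ ∀ᶠ x in 𝓝 (0 : ℂ × ℂ), Q (x.1, x.2, 0) = 0) ∧ deriv (fun w => g (0, w)) 0 ≠ 0) := by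
  have h12 : ((¬ ∀ᶠ z in 𝓝 (0 : ℂ), f (z, 0) = 0) ∧ ¬ ∀ᶠ z in 𝓝 (0 : ℂ), ft (z, 0) = 0) →
      (¬ ∀ᶠ x in 𝓝 (0 : ℂ × ℂ), Q (x.1, x.2, 0) = 0) ∧ deriv (fun w => g (0, w)) 0 ≠ 0 :=
    fun h => ⟨H.finiteType_of_nondeg hM' h.1 h.2, H.transversal_of_nondeg hM' h.1 h.2⟩
  have h23 : deriv (fun w => g (0, w)) 0 ≠ 0 →
      ¬ ((∀ᶠ x in 𝓝 (0 : ℂ × ℂ), g x = 0) ∧ ∀ᶠ x in 𝓝 (0 : ℂ × ℂ), gt x = 0) := by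
    intro hd h
    have ht : Tendsto (fun w : ℂ => ((0, w) : ℂ × ℂ)) (𝓝 0) (𝓝 0) :=
      (by fun_prop : Continuous fun w : ℂ => ((0, w) : ℂ × ℂ)).tendsto' _ _ rfl
    have : (fun w => g (0, w)) =ᶠ[𝓝 0] fun _ => 0 := ht.eventually h.1
    exact hd (by rw [this.deriv_eq, deriv_const])
  have h31 : ((¬ ∀ᶠ x in 𝓝 (0 : ℂ × ℂ), Q (x.1, x.2, 0) = 0) ∧
      ¬ ((∀ᶠ x in 𝓝 (0 : ℂ × ℂ), g x = 0) ∧ ∀ᶠ x in 𝓝 (0 : ℂ × ℂ), gt x = 0)) →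
      (¬ ∀ᶠ z in 𝓝 (0 : ℂ), f (z, 0) = 0) ∧ ¬ ∀ᶠ z in 𝓝 (0 : ℂ), ft (z, 0) = 0 :=
    fun h => ⟨fun h' => h.2 (H.null_of_f_eq_zero h.1 h'),
      fun h' => h.2 (H.null_of_ft_eq_zero h.1 h')⟩
  exact ⟨⟨fun h => ⟨(h12 h).1, h23 (h12 h).2⟩, h31⟩, ⟨h12, fun h => h31 ⟨h.1, h23 h.2⟩⟩⟩

/-- The identification of `ℂ` with `Fin 1 → ℂ`. -/
noncomputable def toVec : ℂ →L[ℂ] Fin 1 → ℂ :=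
  ContinuousLinearMap.pi fun _ => ContinuousLinearMap.id ℂ ℂ

theorem toVec_apply_zero (x : Fin 1 → ℂ) : toVec (x 0) = x := by
  ext i
  rw [Fin.fin_one_eq_zero i]
  rfl

theorem tendsto_toVec : Tendsto toVec (𝓝 0) (𝓝 0) :=
  toVec.continuous.tendsto' _ _ (map_zero _)

theorem eventually_fin_one_iff {P : (Fin 1 → ℂ) → Prop} :
    (∀ᶠ x in 𝓝 (0 : Fin 1 → ℂ), P x) ↔ ∀ᶠ z in 𝓝 (0 : ℂ), P (toVec z) := by
  refine ⟨fun h => tendsto_toVec.eventually h, fun h => ?_⟩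
  filter_upwards [((continuous_apply (0 : Fin 1)).tendsto' (0 : Fin 1 → ℂ) 0 rfl).eventually h]
    with x hx
  rwa [toVec_apply_zero] at hx

theorem eventually_prod_fin_one_iff {X : Type*} [TopologicalSpace X] [Zero X]
    {P : (Fin 1 → ℂ) × X → Prop} :
    (∀ᶠ x in 𝓝 (0 : (Fin 1 → ℂ) × X), P x) ↔ ∀ᶠ z in 𝓝 (0 : ℂ × X), P (toVec z.1, z.2) := by
  constructor
  · intro h
    have ht : Tendsto (fun z : ℂ × X => (toVec z.1, z.2)) (𝓝 0) (𝓝 0) :=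
      ((toVec.continuous.comp continuous_fst).prodMk continuous_snd).tendsto' _ _
        (Prod.ext (map_zero toVec) rfl)
    exact ht.eventually h
  · intro h
    have ht : Tendsto (fun z : (Fin 1 → ℂ) × X => (z.1 0, z.2)) (𝓝 0) (𝓝 0) :=
      (((continuous_apply (0 : Fin 1)).comp continuous_fst).prodMk continuous_snd).tendsto' _ _ rfl
    filter_upwards [ht.eventually h] with x hx
    rwa [toVec_apply_zero] at hx

theorem eventually_det_jacz_iff {f : (Fin 1 → ℂ) → ℂ → Fin 1 → ℂ}
    (hf : AnalyticAt ℂ (fun q : (Fin 1 → ℂ) × ℂ => f q.1 q.2) 0) (h0 : f 0 0 = 0) :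
    (∀ᶠ z in 𝓝 (0 : Fin 1 → ℂ), (jacz f z).det = 0) ↔
      ∀ᶠ z in 𝓝 (0 : ℂ), f (toVec z) 0 0 = 0 := by
  have hF : AnalyticAt ℂ (fun z : Fin 1 → ℂ => f z 0 0) 0 := by
    have h1 : AnalyticAt ℂ (fun z : Fin 1 → ℂ => f z 0) 0 :=
      AnalyticAt.fun_comp_of_eq (g := fun q : (Fin 1 → ℂ) × ℂ => f q.1 q.2) hf
        (analyticAt_id.prod analyticAt_const) rfl
    exact (analyticAt_pi_iff.1 h1) 0
  have hdet : ∀ z, (jacz f z).det = fderiv ℂ (fun z : Fin 1 → ℂ => f z 0 0) z (toVec 1) := by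
    intro z
    have e : (Pi.single 0 1 : Fin 1 → ℂ) = toVec 1 := by
      rw [← toVec_apply_zero (Pi.single 0 1), Pi.single_eq_same]
    rw [Matrix.det_fin_one, ← e]
    rfl
  simp only [hdet]
  constructor
  · intro h
    obtain ⟨r, hr, hball⟩ := Metric.eventually_nhds_iff_ball.1
      (tendsto_toVec.eventually (h.and hF.eventually_analyticAt))
    have hd : ∀ z ∈ Metric.ball (0 : ℂ) r,
        HasDerivAt (fun z : ℂ => f (toVec z) 0 0) 0 z := by
      intro z hz
      have := (hball z hz).2.differentiableAt.hasFDerivAt.comp_hasDerivAt z toVec.hasDerivAt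
      rwa [(hball z hz).1] at this
    filter_upwards [Metric.ball_mem_nhds 0 hr] with z hz
    have := Metric.isOpen_ball.is_const_of_deriv_eq_zero (convex_ball (0 : ℂ) r).isPreconnected
      (fun z hz => (hd z hz).differentiableAt.differentiableWithinAt)
      (fun z hz => (hd z hz).deriv) hz (Metric.mem_ball_self hr)
    simpa [h0] using this
  · intro h
    have h' : ∀ᶠ z in 𝓝 (0 : Fin 1 → ℂ), f z 0 0 = 0 := eventually_fin_one_iff.2 h
    filter_upwards [h'.eventually_nhds] with z hz
    have : (fun z : Fin 1 → ℂ => f z 0 0) =ᶠ[𝓝 z] fun _ => 0 := hz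
    rw [this.fderiv_eq, fderiv_fun_const]
    rfl

theorem IsHSPM.scalarHSPM {Q Q' : (Fin 1 → ℂ) → (Fin 1 → ℂ) → ℂ → ℂ} (hQ : IsNormalDF Q)
    (hQ' : IsNormalDF Q') {f ft : (Fin 1 → ℂ) → ℂ → Fin 1 → ℂ} {g gt : (Fin 1 → ℂ) → ℂ → ℂ}
    (hH : IsHSPM Q Q' f g ft gt) :
    ScalarHSPM (fun p => Q (toVec p.1) (toVec p.2.1) p.2.2)
      (fun p => Q' (toVec p.1) (toVec p.2.1) p.2.2) (fun x => f (toVec x.1) x.2 0)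
      (fun x => g (toVec x.1) x.2) (fun x => ft (toVec x.1) x.2 0)
      (fun x => gt (toVec x.1) x.2) := by
  obtain ⟨af, ag, aft, agt, f0, g0, ft0, gt0, heq⟩ := hH
  have a1 : AnalyticAt ℂ (fun x : ℂ × ℂ => (toVec x.1, x.2)) 0 :=
    ((toVec.analyticAt _).comp analyticAt_fst).prod analyticAt_snd
  have z1 : (fun x : ℂ × ℂ => (toVec x.1, x.2)) 0 = 0 := Prod.ext (map_zero toVec) rfl
  have a2 : AnalyticAt ℂ (fun p : ℂ × ℂ × ℂ => (toVec p.1, toVec p.2.1, p.2.2)) 0 :=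
    ((toVec.analyticAt _).comp analyticAt_fst).prod
      (AnalyticAt.fun_comp_of_eq a1 analyticAt_snd rfl)
  have z2 : (fun p : ℂ × ℂ × ℂ => (toVec p.1, toVec p.2.1, p.2.2)) 0 = 0 :=
    Prod.ext (map_zero toVec) z1
  have t2 : Tendsto (fun p : ℂ × ℂ × ℂ => (toVec p.1, toVec p.2.1, p.2.2)) (𝓝 0) (𝓝 0) :=
    ScalarHSPM.tendsto_of_analyticAt a2 z2
  have hn : ∀ {R : (Fin 1 → ℂ) → (Fin 1 → ℂ) → ℂ → ℂ}, IsNormalDF R →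
      AnalyticAt ℂ (fun p : ℂ × ℂ × ℂ => R (toVec p.1) (toVec p.2.1) p.2.2) 0 ∧
      ∀ᶠ p in 𝓝 (0 : ℂ × ℂ × ℂ), R (toVec 0) (toVec p.2.1) p.2.2 = p.2.2 ∧
        R (toVec p.1) (toVec 0) p.2.2 = p.2.2 := by
    intro R hR
    refine ⟨AnalyticAt.fun_comp_of_eq
      (g := fun q : (Fin 1 → ℂ) × (Fin 1 → ℂ) × ℂ => R q.1 q.2.1 q.2.2) hR.1.self_of_nhds a2 z2,
      ?_⟩
    filter_upwards [t2.eventually hR.2] with p hp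
    rwa [map_zero]
  have hc : ∀ {F : (Fin 1 → ℂ) → ℂ → ℂ}, AnalyticAt ℂ (fun q : (Fin 1 → ℂ) × ℂ => F q.1 q.2) 0 →
      AnalyticAt ℂ (fun x : ℂ × ℂ => F (toVec x.1) x.2) 0 := fun {F} h =>
    AnalyticAt.fun_comp_of_eq (g := fun q : (Fin 1 → ℂ) × ℂ => F q.1 q.2) h a1 z1
  exact
    { analytic_Q := (hn hQ).1
      analytic_Q' := (hn hQ').1
      analytic_f := hc (F := fun z w => f z w 0) ((analyticAt_pi_iff.1 af.self_of_nhds) 0)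
      analytic_g := hc ag.self_of_nhds
      analytic_ft := hc (F := fun z w => ft z w 0) ((analyticAt_pi_iff.1 aft.self_of_nhds) 0)
      analytic_gt := hc agt.self_of_nhds
      normal_Q := (hn hQ).2
      normal_Q' := (hn hQ').2
      f_zero := by simp [f0]
      g_zero := by simp [g0]
      ft_zero := by simp [ft0]
      gt_zero := by simp [gt0]
      eq := by
        filter_upwards [t2.eventually heq] with p hp
        simp only [toVec_apply_zero]
        exact hp }

theorem finiteType_iff {Q : (Fin 1 → ℂ) → (Fin 1 → ℂ) → ℂ → ℂ} :
    FiniteType Q ↔ ¬ ∀ᶠ x in 𝓝 (0 : ℂ × ℂ), Q (toVec x.1) (toVec x.2) 0 = 0 := by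
  refine not_congr (eventually_prod_fin_one_iff.trans ⟨fun h => ?_, fun h => ?_⟩)
  · have ht : Tendsto (fun x : ℂ × ℂ => (x.1, toVec x.2)) (𝓝 0) (𝓝 0) :=
      (by fun_prop : Continuous fun x : ℂ × ℂ => (x.1, toVec x.2)).tendsto' _ _
        (Prod.ext rfl (map_zero toVec))
    exact ht.eventually h
  · have ht : Tendsto (fun x : ℂ × (Fin 1 → ℂ) => (x.1, x.2 0)) (𝓝 0) (𝓝 0) :=
      (by fun_prop : Continuous fun x : ℂ × (Fin 1 → ℂ) => (x.1, x.2 0)).tendsto' _ _ rfl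
    filter_upwards [ht.eventually h] with x hx
    rwa [toVec_apply_zero] at hx

/-- Theorem 1.6, equivalences: for hypersurfaces in `ℂ²` with `M'` of finite
type at `0`, total Segre nondegeneracy of `ℋ` is equivalent to (`M` of finite type and `ℋ` not
transversally null) and to (`M` of finite type and `ℋ` Segre transversal to `ℳ'` at `0`). -/
theorem statement5 (Q Q' : (Fin 1 → ℂ) → (Fin 1 → ℂ) → ℂ → ℂ)
    (hQ : IsRealNormalDF Q) (hQ' : IsRealNormalDF Q')
    (hM' : FiniteType Q')
    (f ft : (Fin 1 → ℂ) → ℂ → Fin 1 → ℂ) (g gt : (Fin 1 → ℂ) → ℂ → ℂ)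
    (hH : IsHSPM Q Q' f g ft gt) :
    (TotallySegreNondeg f ft ↔ (FiniteType Q ∧ ¬ TransversallyNull g gt)) ∧
    (TotallySegreNondeg f ft ↔ (FiniteType Q ∧ SegreTransversal g)) := by
  have key := (hH.scalarHSPM hQ.1 hQ'.1).iff_of_finiteType (finiteType_iff.1 hM')
  obtain ⟨af, -, aft, -, f0, -, ft0, -, -⟩ := hH
  rw [TotallySegreNondeg, TransversallyNull, SegreTransversal, finiteType_iff,
    eventually_det_jacz_iff af.self_of_nhds f0, eventually_det_jacz_iff aft.self_of_nhds ft0,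
    eventually_prod_fin_one_iff, eventually_prod_fin_one_iff]
  simpa only [map_zero] using key

end HSPMpaper
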